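/- Let L_p be the poset of p-subgroups of G = PSU(3,q), q = 2^(2^n), ordered by inclusion, with Möbius function μ_{L_p}. If p is a prime dividing q-1, then ∑_H μ_{L_p}({1}, H) = -(q⁶+q³)/2, where the sum ranges over all nontrivial p-subgroups H of G. If p is a prime dividing q²-q+1, then ∑_H μ_{L_p}({1}, H) = -(q⁶+q⁵-q⁴-q³)/3 = -q³(q+1)²(q-1)/3. (In both cases every nontrivial p-subgroup with nonzero Möbius value has order p and contributes -1.) -/

import Mathlib

/-!
The group `SU(3,q)` has trivial centre, because `3` and `q + 1` are coprime, so `G = PSU(3,q)` is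
the group of unitary `3 × 3` matrices of determinant `1` (`exists_psuHom`).

For both kinds of primes `p`, commuting elements of order `p` in `G` generate the same subgroup.
A nontrivial `p`-subgroup therefore contains exactly one subgroup of order `p`, and induction on
the order gives Möbius value `-1` on the subgroups of order `p` and `0` on the larger ones. The sum
in question is minus the number of subgroups of order `p` (`mobius_sum`).

These subgroups are counted through bases of eigenvectors, called frames here
(`card_sub_of_frames`). An element of order `p` has three distinct eigenvalues, so its frame is
unique up to scaling and ordering, which yields both the count and the commutation property.

* If `p ∣ q - 1`, the eigenvalues are `η`, `η⁻¹`, `1` with `η` in the field of `q` elements. The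
  eigenvectors for `η` and `η⁻¹` are isotropic, and the third one spans the orthogonal complement
  of the first two. Any ordered pair of distinct isotropic points arises in this way, and each
  subgroup comes from two pairs (`card_sub_split`). There are `q³ + 1` isotropic points
  (`card_curve_two`), which gives `(q³ + 1) q³ / 2` subgroups.
* If `p ∣ q² - q + 1`, the eigenvalues lie in the field of `q⁶` elements and are permuted
  cyclically by `x ↦ x ^ q²`. The eigenvectors are conjugate points of the Hermitian curve that are
  not defined over the field of `q²` elements, and each such point arises. Every subgroup comes
  from three of them (`card_sub_cubic`). The affine curve has `q⁶ + q⁵ - q⁴` points over the field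
  of `q⁶` elements (`card_curve_six`), of which `q³` are rational over the smaller field.
-/

open scoped Classical Pointwise

namespace PSUPaper

/-- `q = 2^(2^n)`. -/
abbrev qval (n : ℕ) : ℕ := 2 ^ 2 ^ n

/-- The field with `q² = 2^(2^(n+1))` elements. -/
abbrev Fq2 (n : ℕ) : Type := GaloisField 2 (2 ^ (n + 1))

/-- The involutory automorphism `x ↦ x^q` of `F_{q²}`, as a star-ring structure. -/
noncomputable instance starRingFq2 (n : ℕ) : StarRing (Fq2 n) where
  star x := x ^ qval n
  star_involutive x := by
    letI : Fintype (Fq2 n) := Fintype.ofFinite _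
    show (x ^ qval n) ^ qval n = x
    rw [← pow_mul]
    have h : qval n * qval n = 2 ^ 2 ^ (n + 1) := by
      rw [← pow_add, ← two_mul, pow_succ, mul_comm]
    have hcard : Fintype.card (Fq2 n) = 2 ^ 2 ^ (n + 1) := by
      rw [← Nat.card_eq_fintype_card, GaloisField.card 2 (2 ^ (n + 1)) (by positivity)]
    rw [h, ← hcard]
    exact FiniteField.pow_card x
  star_mul x y := by
    show (x * y) ^ qval n = y ^ qval n * x ^ qval n
    rw [mul_pow, mul_comm]
  star_add x y := by
    show (x + y) ^ qval n = x ^ qval n + y ^ qval n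
    exact add_pow_char_pow x y 2 (2 ^ n)

/-- `SU(3,q)`: the subgroup of the unitary group `{M | M * (M^σ)ᵀ = 1}` (with respect to the
star structure `σ : x ↦ x^q` on `F_{q²}`) consisting of the matrices of determinant 1. -/
noncomputable def SU3 (n : ℕ) : Subgroup (Matrix.unitaryGroup (Fin 3) (Fq2 n)) where
  carrier := {M | (M : Matrix (Fin 3) (Fin 3) (Fq2 n)).det = 1}
  one_mem' := by simp
  mul_mem' := by
    intro a b ha hb
    simp only [Set.mem_setOf_eq, Matrix.UnitaryGroup.mul_val, Matrix.det_mul] at *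
    rw [ha, hb, mul_one]
  inv_mem' := by
    intro a ha
    simp only [Set.mem_setOf_eq, Matrix.UnitaryGroup.inv_val] at *
    rw [Matrix.star_eq_conjTranspose, Matrix.det_conjTranspose, ha, star_one]

/-- `PSU(3,q)`: the quotient of `SU(3,q)` by its center. -/
noncomputable abbrev PSU3 (n : ℕ) : Type := SU3 n ⧸ Subgroup.center (SU3 n)

/-- `mu` is the Möbius function `H ↦ μ(H, G)` of the subgroup lattice of `G`:
`μ(G,G) = 1` and `∑_{J : H ≤ J ≤ G} μ(J,G) = 0` for `H < G`. -/
def IsSubgroupMobius {G : Type*} [Group G] (mu : Subgroup G → ℤ) : Prop :=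
  ∀ H : Subgroup G, (∑ᶠ K ∈ {K : Subgroup G | H ≤ K}, mu K) = if H = ⊤ then 1 else 0

/-- `H` and `K` are conjugate subgroups. -/
def IsConjSub {G : Type*} [Group G] (H K : Subgroup G) : Prop :=
  ∃ g : G, Subgroup.map (MulAut.conj g).toMonoidHom H = K

/-- The conjugacy classes of subgroups of `G`. -/
abbrev SubClasses (G : Type*) [Group G] : Type _ :=
  Quotient (MulAction.orbitRel (ConjAct G) (Subgroup G))

/-- The conjugacy class of a subgroup. -/
def clsOf {G : Type*} [Group G] (H : Subgroup G) : SubClasses G :=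
  Quotient.mk (MulAction.orbitRel (ConjAct G) (Subgroup G)) H

/-- The order on conjugacy classes of subgroups: `[H] ≤ [K]` iff `H` is contained in some
conjugate of `K`. -/
def clsLe {G : Type*} [Group G] (x y : SubClasses G) : Prop :=
  ∃ H K : Subgroup G, clsOf H = x ∧ clsOf K = y ∧ ∃ g : ConjAct G, H ≤ g • K

/-- `lam` is the Möbius function `[H] ↦ μ([H], [G])` of the poset of conjugacy classes of
subgroups of `G`: `μ([G],[G]) = 1` and `∑_{[J] : [H] ≤ [J] ≤ [G]} μ([J],[G]) = 0` for
`[H] < [G]`. -/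
def IsClassMobius {G : Type*} [Group G] (lam : SubClasses G → ℤ) : Prop :=
  ∀ x : SubClasses G, (∑ᶠ y ∈ {y : SubClasses G | clsLe x y}, lam y) =
    if x = clsOf (⊤ : Subgroup G) then 1 else 0

/-- `m` is the Möbius function `H ↦ μ_{L_p}({1}, H)` of the poset `L_p` of `p`-subgroups of `G`:
`μ_{L_p}({1},{1}) = 1` and `∑_{J ∈ L_p : J ≤ K} μ_{L_p}({1},J) = 0` for `{1} < K ∈ L_p`. -/
def IsPMobiusBot {G : Type*} [Group G] (p : ℕ) (m : Subgroup G → ℤ) : Prop :=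
  m ⊥ = 1 ∧ ∀ K : Subgroup G, IsPGroup p K → ⊥ < K →
    (∑ᶠ J ∈ {J : Subgroup G | IsPGroup p J ∧ J ≤ K}, m J) = 0

/-! ### Möbius function of the `p`-subgroups -/

/-- A nontrivial `p`-group has a central element of order `p`; if commuting elements of order `p`
generate the same subgroup, this element generates the only subgroup of order `p`. -/
theorem exists_unique_sub {G : Type*} [Group G] [Finite G] {p : ℕ} (hp : p.Prime)
    (hC : ∀ g z : G, orderOf g = p → orderOf z = p → Commute g z → g ∈ Subgroup.zpowers z)
    {K : Subgroup G} (hK : IsPGroup p K) (hK1 : K ≠ ⊥) :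
    ∃ P : Subgroup G, P ≤ K ∧ Nat.card P = p ∧
      ∀ Q : Subgroup G, Q ≤ K → Nat.card Q = p → Q = P := by
  have : Fact p.Prime := ⟨hp⟩
  have : Nontrivial K := (Subgroup.nontrivial_iff_ne_bot K).2 hK1
  have := hK.center_nontrivial
  have hZ : IsPGroup p (Subgroup.center K) := hK.to_subgroup _
  obtain ⟨k, hk, hcard⟩ := hZ.nontrivial_iff_card.1 inferInstance
  have hdvd : p ∣ Nat.card (Subgroup.center K) := hcard ▸ dvd_pow_self p hk.ne'
  obtain ⟨z, hz⟩ := exists_prime_orderOf_dvd_card' p hdvd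
  have hz' : orderOf ((z : K) : G) = p := by
    rw [Subgroup.orderOf_coe, Subgroup.orderOf_coe, hz]
  refine ⟨Subgroup.zpowers ((z : K) : G), ?_, ?_, ?_⟩
  · rw [Subgroup.zpowers_le]; exact (z : K).2
  · rw [Nat.card_zpowers, hz']
  · intro Q hQ hQp
    have : ∀ g ∈ Q, g ∈ Subgroup.zpowers ((z : K) : G) := by
      intro g hg
      by_cases h1 : g = 1
      · rw [h1]; exact one_mem _
      have hg' : orderOf g = p := by
        have h2 : orderOf (⟨g, hg⟩ : Q) ∣ p := hQp ▸ orderOf_dvd_natCard _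
        rw [Subgroup.orderOf_mk] at h2
        rcases (Nat.dvd_prime hp).1 h2 with h | h
        · exact absurd (orderOf_eq_one_iff.1 h) h1
        · exact h
      refine hC g _ hg' hz' ?_
      have := (Subgroup.mem_center_iff.1 z.2) ⟨g, hQ hg⟩
      exact congrArg Subtype.val this
    refine Subgroup.eq_of_le_of_card_ge this ?_
    rw [hQp, Nat.card_zpowers, hz']

/-- Below a `p`-subgroup `K` of order larger than `p`, only the trivial subgroup, the unique
subgroup of order `p` and `K` itself can have a nonzero value, and the first two cancel. The bound
`N` on the order of `K` serves the induction. -/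
theorem mobius_value {G : Type*} [Group G] [Finite G] {p : ℕ} (hp : p.Prime)
    (m : Subgroup G → ℤ) (hm : IsPMobiusBot p m)
    (hC : ∀ g z : G, orderOf g = p → orderOf z = p → Commute g z → g ∈ Subgroup.zpowers z)
    (N : ℕ) : ∀ K : Subgroup G, Nat.card K ≤ N → IsPGroup p K → K ≠ ⊥ →
      m K = if Nat.card K = p then -1 else 0 := by
  induction N with
  | zero => intro K hK; have := Nat.card_pos (α := K); omega
  | succ N ih =>
    intro K hcard hK hK1
    obtain ⟨P, hPK, hPp, hPu⟩ := exists_unique_sub hp hC hK hK1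
    have h0 := hm.2 K hK (bot_lt_iff_ne_bot.2 hK1)
    have hP1 : P ≠ ⊥ := by
      rintro rfl
      rw [Subgroup.card_bot] at hPp
      exact hp.one_lt.ne hPp
    have hset : {J : Subgroup G | IsPGroup p J ∧ J ≤ K} = {J | J ≤ K} := by
      ext J
      exact ⟨fun h => h.2, fun h => ⟨hK.to_le h, h⟩⟩
    rw [hset, finsum_mem_eq_finite_toFinset_sum _ (Set.toFinite _)] at h0
    have hlt : ∀ J : Subgroup G, J ≤ K → J ≠ K → Nat.card J ≤ N := by
      intro J hJ hJK
      by_contra hlt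
      exact hJK (Subgroup.eq_of_le_of_card_ge hJ (by omega))
    by_cases hc : Nat.card K = p
    · -- a subgroup of prime order has only the two trivial subgroups
      rw [if_pos hc]
      have hs : (Set.toFinite {J : Subgroup G | J ≤ K}).toFinset = {⊥, K} := by
        ext J
        simp only [Set.Finite.mem_toFinset, Set.mem_ofPred_eq, Finset.mem_insert,
          Finset.mem_singleton]
        constructor
        · intro hJ
          have := Subgroup.card_dvd_of_le hJ
          rw [hc, Nat.dvd_prime hp] at this
          rcases this with h | h
          · exact Or.inl (Subgroup.card_eq_one.1 h)
          · exact Or.inr (Subgroup.eq_of_le_of_card_ge hJ (by omega))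
        · rintro (rfl | rfl)
          · exact bot_le
          · exact le_rfl
      rw [hs, Finset.sum_pair (Ne.symm hK1), hm.1] at h0
      linarith
    · rw [if_neg hc]
      have hPK' : P ≠ K := by rintro rfl; exact hc hPp
      have hsub : ({⊥, P, K} : Finset (Subgroup G)) ⊆
          (Set.toFinite {J : Subgroup G | J ≤ K}).toFinset := by
        intro J
        simp only [Set.Finite.mem_toFinset, Set.mem_ofPred_eq, Finset.mem_insert,
          Finset.mem_singleton]
        rintro (rfl | rfl | rfl)
        · exact bot_le
        · exact hPK
        · exact le_rfl
      rw [← Finset.sum_subset hsub] at h0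
      · rw [Finset.sum_insert, Finset.sum_pair hPK', hm.1,
          ih P (hlt P hPK hPK') (hK.to_le hPK) hP1, if_pos hPp] at h0
        · linarith
        · simp only [Finset.mem_insert, Finset.mem_singleton]
          rintro (h | h)
          · exact hP1 h.symm
          · exact hK1 h.symm
      · intro J hJ hJ'
        simp only [Set.Finite.mem_toFinset, Set.mem_ofPred_eq, Finset.mem_insert,
          Finset.mem_singleton, not_or] at hJ hJ'
        rw [ih J (hlt J hJ hJ'.2.2) (hK.to_le hJ) hJ'.1, if_neg]
        intro h
        exact hJ'.2.1 (hPu J hJ h)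

/-- The sum of the Möbius function over the nontrivial `p`-subgroups is minus the number of
subgroups of order `p`. -/
theorem mobius_sum {G : Type*} [Group G] [Finite G] {p : ℕ} (hp : p.Prime)
    (m : Subgroup G → ℤ) (hm : IsPMobiusBot p m)
    (hC : ∀ g z : G, orderOf g = p → orderOf z = p → Commute g z → g ∈ Subgroup.zpowers z) :
    (∑ᶠ H ∈ {H : Subgroup G | IsPGroup p H ∧ H ≠ ⊥}, m H) =
      -(Nat.card {P : Subgroup G // Nat.card P = p} : ℤ) := by
  rw [finsum_mem_eq_finite_toFinset_sum _ (Set.toFinite _)]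
  rw [Finset.sum_congr rfl (g := fun H : Subgroup G => if Nat.card H = p then (-1 : ℤ) else 0)]
  · rw [← Finset.sum_filter, Finset.sum_const]
    have : (Finset.filter (fun H : Subgroup G => Nat.card H = p)
        (Set.toFinite {H : Subgroup G | IsPGroup p H ∧ H ≠ ⊥}).toFinset).card =
        Nat.card {P : Subgroup G // Nat.card P = p} := by
      refine (Nat.subtype_card _ fun P => ?_).symm
      simp only [Finset.mem_filter, Set.Finite.mem_toFinset, Set.mem_ofPred_eq]
      refine ⟨fun h => h.2, fun h => ⟨⟨?_, ?_⟩, h⟩⟩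
      · exact IsPGroup.of_card (n := 1) (by rw [h, pow_one])
      · rintro rfl
        rw [Subgroup.card_bot] at h
        exact hp.one_lt.ne h
    rw [this]; simp
  · intro H hH
    simp only [Set.Finite.mem_toFinset, Set.mem_ofPred_eq] at hH
    exact mobius_value hp m hm hC _ H le_rfl hH.1 hH.2

/-! ### Subgroups of order `p` and eigenframes -/

theorem card_of_fibers {α β : Type*} [Finite α] [Finite β] (f : α → β) {k : ℕ}
    (h : ∀ b, Nat.card {a // f a = b} = k) : Nat.card α = Nat.card β * k := by
  have := Fintype.ofFinite β
  rw [← Nat.card_congr (Equiv.sigmaFiberEquiv f), Nat.card_sigma, Finset.sum_congr rfl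
    (fun b _ => h b), Finset.sum_const, Finset.card_univ, Nat.card_eq_fintype_card, smul_eq_mul]

theorem matrix_ext_of_basis {K : Type*} [Field K] {b : Fin 3 → Fin 3 → K}
    (hb : LinearIndependent K b) {A B : Matrix (Fin 3) (Fin 3) K}
    (h : ∀ j, A.mulVec (b j) = B.mulVec (b j)) : A = B := by
  have hB : Matrix.toLin' A = Matrix.toLin' B := by
    refine (basisOfLinearIndependentOfCardEqFinrank hb (by simp)).ext fun j => ?_
    simpa using h j
  exact Matrix.toLin'.injective hB

/-- A matrix with distinct eigenvalues on a basis has no eigenvectors beyond the multiples of the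
basis vectors. -/
theorem eigenvector_of_frame {K : Type*} [Field K] {b : Fin 3 → Fin 3 → K}
    (hb : LinearIndependent K b) {A : Matrix (Fin 3) (Fin 3) K} {d : Fin 3 → K}
    (hA : ∀ j, A.mulVec (b j) = d j • b j) (hd : Function.Injective d)
    {u : Fin 3 → K} (hu : u ≠ 0) {μ : K} (h : A.mulVec u = μ • u) :
    ∃ i, μ = d i ∧ ∃ c : K, u = c • b i := by
  obtain ⟨c, hc⟩ : ∃ c : Fin 3 → K, ∑ j, c j • b j = u := by
    have := (basisOfLinearIndependentOfCardEqFinrank hb (by simp)).sum_repr u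
    simp only [coe_basisOfLinearIndependentOfCardEqFinrank] at this
    exact ⟨_, this⟩
  have h1 : ∀ j, c j * (d j - μ) = 0 := by
    have h2 : ∑ j, (c j * (d j - μ)) • b j = 0 := by
      have h3 : A.mulVec (∑ j, c j • b j) = ∑ j, (c j * d j) • b j := by
        rw [Matrix.mulVec_sum]
        refine Finset.sum_congr rfl fun j _ => ?_
        rw [Matrix.mulVec_smul, hA, smul_smul]
      rw [hc, h, ← hc, Finset.smul_sum] at h3
      simp only [mul_sub, sub_smul, Finset.sum_sub_distrib, ← h3, smul_smul]
      rw [sub_eq_zero]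
      exact Finset.sum_congr rfl fun j _ => by rw [mul_comm]
    exact Fintype.linearIndependent_iff.1 hb _ h2
  obtain ⟨i, hi⟩ : ∃ i, c i ≠ 0 := by
    by_contra! hall
    exact hu (by rw [← hc]; simp [hall])
  have hμ : μ = d i := by
    rcases mul_eq_zero.1 (h1 i) with h | h
    · exact absurd h hi
    · exact (sub_eq_zero.1 h).symm
  refine ⟨i, hμ, c i, ?_⟩
  rw [← hc]
  refine Finset.sum_eq_single i (fun j _ hj => ?_) (by simp)
  rcases mul_eq_zero.1 (h1 j) with h | h
  · rw [h, zero_smul]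
  · exact absurd (hd ((sub_eq_zero.1 h).trans hμ)) hj

/-- The elements acting on the `j`-th vector of the frame `b` by `ζ ^ e j`, for a common
`p`-th root of unity `ζ`. -/
def torus {G K : Type*} [Group G] [Field K] (ρ : G →* Matrix (Fin 3) (Fin 3) K) (p : ℕ)
    [hp : Fact p.Prime] (e : Fin 3 → ℕ) (b : Fin 3 → Fin 3 → K) : Subgroup G where
  carrier := {g | ∃ ζ : K, ζ ^ p = 1 ∧ ∀ j, (ρ g).mulVec (b j) = ζ ^ e j • b j}
  one_mem' := ⟨1, by simp, by simp⟩
  mul_mem' := by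
    rintro g h ⟨ζ, hζ, hg⟩ ⟨η, hη, hh⟩
    refine ⟨ζ * η, by rw [mul_pow, hζ, hη, one_mul], fun j => ?_⟩
    rw [map_mul, ← Matrix.mulVec_mulVec, hh, Matrix.mulVec_smul, hg, smul_smul, mul_pow, mul_comm]
  inv_mem' := by
    rintro g ⟨ζ, hζ, hg⟩
    refine ⟨ζ⁻¹, by rw [inv_pow, hζ, inv_one], fun j => ?_⟩
    have hζ0 : ζ ^ e j ≠ 0 := by
      refine pow_ne_zero _ ?_
      rintro rfl
      rw [zero_pow hp.out.ne_zero] at hζ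
      exact zero_ne_one hζ
    have h1 : (ρ g⁻¹).mulVec ((ρ g).mulVec (b j)) = b j := by
      rw [Matrix.mulVec_mulVec, ← map_mul, inv_mul_cancel, map_one, Matrix.one_mulVec]
    rw [hg, Matrix.mulVec_smul] at h1
    rw [inv_pow]
    conv_rhs => rw [← h1, smul_smul, inv_mul_cancel₀ hζ0, one_smul]

section Torus

variable {G K : Type*} [Group G] [Field K] {ρ : G →* Matrix (Fin 3) (Fin 3) K}
  {p : ℕ} [hp : Fact p.Prime] {e : Fin 3 → ℕ} {ζ : K}

theorem mulVec_pow_of_eigen {A : Matrix (Fin 3) (Fin 3) K} {u : Fin 3 → K} {c : K}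
    (h : A.mulVec u = c • u) (i : ℕ) : (A ^ i).mulVec u = c ^ i • u := by
  induction i with
  | zero => simp
  | succ i ih =>
    rw [pow_succ, ← Matrix.mulVec_mulVec, h, Matrix.mulVec_smul, ih, smul_smul, pow_succ, mul_comm]

/-- The torus of a frame is cyclic: it is generated by any element whose eigenvalues on the frame
are given by a primitive `p`-th root of unity. -/
theorem torus_eq_zpowers (hρ : Function.Injective ρ) (hζ : IsPrimitiveRoot ζ p)
    {b : Fin 3 → Fin 3 → K} (hb : LinearIndependent K b) {g : G}
    (hg : ∀ j, (ρ g).mulVec (b j) = ζ ^ e j • b j) :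
    torus ρ p e b = Subgroup.zpowers g := by
  apply le_antisymm
  · rintro h ⟨η, hη, hh⟩
    obtain ⟨i, -, rfl⟩ := hζ.eq_pow_of_pow_eq_one hη
    have : h = g ^ i := by
      refine hρ (matrix_ext_of_basis hb fun j => ?_)
      rw [map_pow, mulVec_pow_of_eigen (hg j), hh, ← pow_mul, ← pow_mul, mul_comm]
    rw [this]
    exact Subgroup.pow_mem _ (Subgroup.mem_zpowers g) i
  · rw [Subgroup.zpowers_le]
    exact ⟨ζ, hζ.pow_eq_one, hg⟩

theorem orderOf_torus_gen (hρ : Function.Injective ρ) (hζ : IsPrimitiveRoot ζ p)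
    (he : e 0 = 1) {b : Fin 3 → Fin 3 → K} (hb : LinearIndependent K b) {g : G}
    (hg : ∀ j, (ρ g).mulVec (b j) = ζ ^ e j • b j) : orderOf g = p := by
  refine orderOf_eq_prime (hρ (matrix_ext_of_basis hb fun j => ?_)) ?_
  · rw [map_pow, mulVec_pow_of_eigen (hg j), ← pow_mul, mul_comm, pow_mul, hζ.pow_eq_one]
    simp
  · rintro rfl
    have h := hg 0
    rw [map_one, Matrix.one_mulVec, he, pow_one] at h
    have h0 : (1 - ζ) • b 0 = 0 := by rw [sub_smul, ← h]; simp
    rcases smul_eq_zero.1 h0 with h1 | h1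
    · exact hζ.ne_one hp.out.one_lt (sub_eq_zero.1 h1).symm
    · exact hb.ne_zero 0 h1

/-- If every element of order `p` of `G` lies in the torus of some member of a family of frames,
then the tori are exactly the subgroups of order `p`, and these subgroups are counted by the
frames, each with multiplicity `k`. -/
theorem card_sub_of_frames [Finite G] (hρ : Function.Injective ρ) (hζ : IsPrimitiveRoot ζ p)
    (he : e 0 = 1) (hd : Function.Injective fun j => ζ ^ e j) {X : Type*} [Finite X]
    (b : X → Fin 3 → Fin 3 → K) (hb : ∀ x, LinearIndependent K (b x))
    (hex : ∀ x, ∃ g : G, ∀ j, (ρ g).mulVec (b x j) = ζ ^ e j • b x j)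
    (hcov : ∀ g : G, orderOf g = p → ∃ x, ∀ j, ∃ c : K, (ρ g).mulVec (b x j) = c • b x j)
    (hev : ∀ g : G, g ^ p = 1 → ∀ x, (∀ j, ∃ c : K, (ρ g).mulVec (b x j) = c • b x j) →
      g ∈ torus ρ p e (b x))
    {k : ℕ} (hk : ∀ x, Nat.card {y // ∀ j, ∃ i, ∃ c : K, b y j = c • b x i} = k) :
    Nat.card X = Nat.card {P : Subgroup G // Nat.card P = p} * k ∧
    ∀ g z : G, orderOf g = p → orderOf z = p → Commute g z → g ∈ Subgroup.zpowers z := by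
  choose γ hγ using hex
  have hT : ∀ x, torus ρ p e (b x) = Subgroup.zpowers (γ x) :=
    fun x => torus_eq_zpowers hρ hζ (hb x) (hγ x)
  have hord : ∀ x, orderOf (γ x) = p := fun x => orderOf_torus_gen hρ hζ he (hb x) (hγ x)
  have hcard : ∀ x, Nat.card (torus ρ p e (b x)) = p := fun x => by
    rw [hT, Nat.card_zpowers, hord]
  have hmem : ∀ z : G, orderOf z = p → ∃ x, torus ρ p e (b x) = Subgroup.zpowers z := by
    intro z hz
    obtain ⟨x, hx⟩ := hcov z hz
    refine ⟨x, (Subgroup.eq_of_le_of_card_ge ?_ ?_).symm⟩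
    · rw [Subgroup.zpowers_le]
      exact hev z (hz ▸ pow_orderOf_eq_one z) x hx
    · rw [hcard, Nat.card_zpowers, hz]
  have hinj : ∀ (g : G) (u : Fin 3 → K), (ρ g).mulVec u = 0 → u = 0 := by
    intro g u h
    have := congrArg (ρ g⁻¹).mulVec h
    rwa [Matrix.mulVec_mulVec, ← map_mul, inv_mul_cancel, map_one, Matrix.one_mulVec,
      Matrix.mulVec_zero] at this
  refine ⟨?_, ?_⟩
  · have hfib : ∀ x y, torus ρ p e (b y) = torus ρ p e (b x) ↔
        ∀ j, ∃ i, ∃ c : K, b y j = c • b x i := by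
      intro x y
      constructor
      · intro h j
        have h1 : γ x ∈ torus ρ p e (b y) := by rw [h, hT]; exact Subgroup.mem_zpowers _
        obtain ⟨η, -, h2⟩ := h1
        obtain ⟨i, -, c, hc⟩ := eigenvector_of_frame (hb x) (hγ x) hd ((hb y).ne_zero j) (h2 j)
        exact ⟨i, c, hc⟩
      · intro h
        refine (Subgroup.eq_of_le_of_card_ge ?_ ?_).symm
        · rw [hT x, Subgroup.zpowers_le]
          refine hev _ (by rw [← hord x]; exact pow_orderOf_eq_one _) y fun j => ?_
          obtain ⟨i, c, hc⟩ := h j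
          refine ⟨ζ ^ e i, ?_⟩
          rw [hc, Matrix.mulVec_smul, hγ, smul_comm]
        · rw [hcard, hcard]
    let T : X → {P : Subgroup G // Nat.card P = p} := fun x => ⟨torus ρ p e (b x), hcard x⟩
    refine card_of_fibers T fun ⟨P, hP⟩ => ?_
    obtain ⟨z, hz⟩ := exists_prime_orderOf_dvd_card' (G := P) p (dvd_of_eq hP.symm)
    have hz' : orderOf (z : G) = p := by rw [Subgroup.orderOf_coe, hz]
    have hzP : Subgroup.zpowers (z : G) = P := by
      refine Subgroup.eq_of_le_of_card_ge ?_ ?_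
      · rw [Subgroup.zpowers_le]; exact z.2
      · rw [hP, Nat.card_zpowers, hz']
    obtain ⟨x, hx⟩ := hmem z hz'
    rw [← hk x]
    refine Nat.card_congr (Equiv.subtypeEquivRight fun y => ?_)
    rw [← hfib x y, hx, hzP]
    exact Subtype.ext_iff
  · intro g z hg hz hgz
    obtain ⟨x, hx⟩ := hmem z hz
    rw [← hx]
    refine hev g (hg ▸ pow_orderOf_eq_one g) x fun j => ?_
    have hcomm : Commute g (γ x) := by
      have : γ x ∈ Subgroup.zpowers z := by rw [← hx, hT]; exact Subgroup.mem_zpowers _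
      obtain ⟨i, hi⟩ := Subgroup.mem_zpowers_iff.1 this
      rw [← hi]
      exact hgz.zpow_right i
    have h1 : (ρ (γ x)).mulVec ((ρ g).mulVec (b x j)) = ζ ^ e j • (ρ g).mulVec (b x j) := by
      rw [Matrix.mulVec_mulVec, ← map_mul, ← hcomm.eq, map_mul, ← Matrix.mulVec_mulVec, hγ,
        Matrix.mulVec_smul]
    obtain ⟨i, hi, c, hc⟩ := eigenvector_of_frame (hb x) (hγ x) hd
      (fun h => (hb x).ne_zero j (hinj g _ h)) h1
    obtain rfl : j = i := hd hi
    exact ⟨c, hc⟩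

end Torus

/-! ### Points of the Hermitian curve -/

/-- A monic `q`-polynomial of degree `q ^ d` with coefficients `0` and `1` has at most `q ^ d`
zeros. -/
theorem card_zeros_le {K : Type*} [Field K] [Finite K] {q : ℕ} (hq : 2 ≤ q) (d : ℕ) (s : Finset ℕ)
    (hs : ∀ i ∈ s, i < d) :
    Nat.card {x : K // x ^ q ^ d + ∑ i ∈ s, x ^ q ^ i = 0} ≤ q ^ d := by
  have := Fintype.ofFinite K
  let R : Polynomial K := ∑ i ∈ s, Polynomial.X ^ q ^ i
  have hR : R.degree < (q ^ d : ℕ) := by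
    refine lt_of_le_of_lt (Polynomial.degree_sum_le _ _) ?_
    rw [Finset.sup_lt_iff (WithBot.bot_lt_coe _)]
    intro i hi
    rw [Polynomial.degree_X_pow]
    exact_mod_cast Nat.pow_lt_pow_right hq (hs i hi)
  have hP : (Polynomial.X ^ q ^ d + R).natDegree = q ^ d :=
    Polynomial.natDegree_eq_of_degree_eq_some ((Polynomial.degree_add_eq_left_of_degree_lt
      (by rwa [Polynomial.degree_X_pow])).trans (Polynomial.degree_X_pow _))
  have hP0 : Polynomial.X ^ q ^ d + R ≠ 0 := (Polynomial.monic_X_pow_add hR).ne_zero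
  refine le_trans ?_ ((Polynomial.card_roots' _).trans hP.le)
  refine le_trans ?_ (Multiset.toFinset_card_le _)
  refine (Nat.subtype_card _ fun x => ?_).le
  rw [Multiset.mem_toFinset, Polynomial.mem_roots hP0]
  simp [R, Polynomial.eval_finsetSum]

/-- If `f ∘ g = 0` for an additive map `g`, then `|K| = |im g| |ker g| ≤ |ker f| |ker g|`. Bounds
on the two kernels whose product is `|K|` are therefore attained, and the kernel of `f` is the image
of `g`. -/
theorem card_kernels {K : Type*} [AddCommGroup K] [Finite K] (f g : K → K)
    (hg : ∀ x y, g (x + y) = g x + g y) (hfg : ∀ x, f (g x) = 0) {a b : ℕ}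
    (ha : Nat.card {x // f x = 0} ≤ a) (hb : Nat.card {x // g x = 0} ≤ b)
    (hab : a * b = Nat.card K) :
    Nat.card {x // f x = 0} = a ∧ Nat.card {x // g x = 0} = b ∧
      ∀ y, f y = 0 → ∃ x, g x = y := by
  let g' : K →+ K := AddMonoidHom.mk' g hg
  have h1 : Nat.card g'.range * Nat.card g'.ker = Nat.card K := by
    rw [← Nat.card_congr (QuotientAddGroup.quotientKerEquivRange g').toEquiv]
    exact (AddSubgroup.card_eq_card_quotient_mul_card_addSubgroup g'.ker).symm
  have h2 : Nat.card g'.ker = Nat.card {x // g x = 0} := rfl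
  have hpos : 0 < Nat.card K := Nat.card_pos
  let i : g'.range → {x // f x = 0} := fun y => ⟨y.1, by
    obtain ⟨x, hx⟩ := y.2
    rw [← hx]; exact hfg x⟩
  have hi : Function.Injective i := fun y z h =>
    Subtype.ext (congrArg (fun t : {x // f x = 0} => t.1) h)
  have h3 := Nat.card_le_card_of_injective i hi
  rw [h2] at h1
  have ha0 : 0 < a := Nat.pos_of_mul_pos_right (hab ▸ hpos)
  have hb0 : 0 < b := Nat.pos_of_mul_pos_left (hab ▸ hpos)
  have h4 : Nat.card g'.range = a := by nlinarith
  have h5 : Nat.card {x // g x = 0} = b := by nlinarith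
  refine ⟨by omega, h5, fun y hy => ?_⟩
  have hs : Function.Surjective i :=
    ((Nat.bijective_iff_injective_and_card i).2 ⟨hi, by omega⟩).2
  obtain ⟨⟨z, x, hx⟩, hz⟩ := hs ⟨y, hy⟩
  exact ⟨x, hx.trans (congrArg Subtype.val hz)⟩

/-- The affine Hermitian curve `y ^ q + y = 1 + z ^ (q + 1)` over `K`, where `φ` is the
`q`-power map. Its points `(y, z)` correspond to the isotropic vectors `(y + 1, y, z)` of the
Hermitian form `∑ xᵢ ^ (q + 1)`. -/
abbrev Curve {K : Type*} [Field K] (φ : K →+* K) : Type _ :=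
  {v : K × K // φ v.1 + v.1 = 1 + v.2 * φ v.2}

theorem frob_six {K : Type*} [Field K] [Finite K] {φ : K →+* K} {q : ℕ}
    (hφ : ∀ x, φ x = x ^ q) (hK : Nat.card K = q ^ 6) (x : K) :
    φ (φ (φ (φ (φ (φ x))))) = x := by
  have := Fintype.ofFinite K
  simp only [hφ, ← pow_mul]
  have h : q * q * q * q * q * q = Fintype.card K := by
    rw [← Nat.card_eq_fintype_card, hK]; ring
  rw [h]
  exact FiniteField.pow_card x

section Count

variable {K : Type*} [Field K] [CharP K 2] {φ : K →+* K} {q : ℕ}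

theorem card_translate (hker : Nat.card {x : K // φ x + x = 0} = q) {c y0 : K}
    (h0 : φ y0 + y0 = c) : Nat.card {y : K // φ y + y = c} = q := by
  rw [← hker]
  refine Nat.card_congr ⟨fun y => ⟨y.1 + y0, ?_⟩, fun y => ⟨y.1 + y0, ?_⟩, fun y => ?_, fun y => ?_⟩
  · have := y.2; rw [map_add]; grind
  · have := y.2; rw [map_add]; grind
  · ext; simp only; grind
  · ext; simp only; grind

theorem card_curve_fiber (hker : Nat.card {x : K // φ x + x = 0} = q) {z : K}
    (hz : ∃ y, φ y + y = 1 + z * φ z) :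
    Nat.card {v : Curve φ // v.1.2 = z} = q := by
  obtain ⟨y0, h0⟩ := hz
  rw [← card_translate hker h0]
  refine Nat.card_congr ⟨fun v => ⟨v.1.1.1, ?_⟩, fun y => ⟨⟨(y.1, z), y.2⟩, rfl⟩,
    fun v => ?_, fun y => rfl⟩
  · have := v.1.2
    rwa [v.2] at this
  · obtain ⟨⟨⟨y, z'⟩, h⟩, rfl⟩ := v
    rfl

/-- In the field of `q ^ 2` elements the kernel and the image of `x ↦ x ^ q + x` both consist of the
fixed points of `φ`. -/
theorem kernels_two [Finite K] (hq : 2 ≤ q) (hφ : ∀ x, φ x = x ^ q) (hK : Nat.card K = q ^ 2)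
    (hφ2 : ∀ x, φ (φ x) = x) :
    Nat.card {x : K // φ x + x = 0} = q ∧ ∀ c : K, φ c + c = 0 → ∃ y, φ y + y = c := by
  have h : Nat.card {x : K // φ x + x = 0} ≤ q := by
    have := card_zeros_le (K := K) hq 1 {0} (by simp)
    simpa [← hφ] using this
  obtain ⟨h1, -, h3⟩ := card_kernels (fun x : K => φ x + x) (fun x => φ x + x)
    (fun x y => by simp only [map_add]; ring)
    (fun x => by simp only [map_add, hφ2]; grind) h h (by rw [hK]; ring)
  exact ⟨h1, h3⟩

/-- The Hermitian curve has `q ^ 3` affine points over the field with `q ^ 2` elements. -/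
theorem card_curve_two [Finite K] (hq : 2 ≤ q) (hφ : ∀ x, φ x = x ^ q) (hK : Nat.card K = q ^ 2)
    (hφ2 : ∀ x, φ (φ x) = x) : Nat.card (Curve φ) = q ^ 3 := by
  obtain ⟨h1, h2⟩ := kernels_two hq hφ hK hφ2
  rw [card_of_fibers (fun v : Curve φ => v.1.2) fun z => card_curve_fiber h1 (h2 _ ?_), hK]
  · ring
  · simp only [map_add, map_mul, map_one, hφ2]; grind

/-- The trace from the field with `q ^ 6` elements to the field with `q` elements. -/
def trSix (φ : K →+* K) (x : K) : K :=
  x + φ x + φ (φ x) + φ (φ (φ x)) + φ (φ (φ (φ x))) + φ (φ (φ (φ (φ x))))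

/-- The image of `x ↦ x ^ q + x` is the kernel of the trace to the field of `q` elements. -/
theorem kernels_six_one [Finite K] (hq : 2 ≤ q) (hφ : ∀ x, φ x = x ^ q)
    (hK : Nat.card K = q ^ 6) :
    Nat.card {x : K // φ x + x = 0} = q ∧ ∀ c : K, trSix φ c = 0 → ∃ y, φ y + y = c := by
  have h6 := frob_six hφ hK
  have h : Nat.card {x : K // φ x + x = 0} ≤ q := by
    have := card_zeros_le (K := K) hq 1 {0} (by simp)
    simpa [← hφ] using this
  have h' : Nat.card {x : K // trSix φ x = 0} ≤ q ^ 5 := by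
    have := card_zeros_le (K := K) hq 5 (Finset.range 5) (by simp)
    refine le_of_eq_of_le ?_ this
    refine Nat.card_congr (Equiv.subtypeEquivRight fun x => ?_)
    simp only [trSix, Finset.sum_range_succ, Finset.sum_range_zero, hφ, ← pow_mul]
    ring_nf
  obtain ⟨-, h2, h3⟩ := card_kernels (trSix φ) (fun x => φ x + x)
    (fun x y => by simp only [map_add]; ring)
    (fun x => by simp only [trSix, map_add, h6]; grind) h' h (by rw [hK]; ring)
  exact ⟨h2, h3⟩

/-- The field of `q ^ 3` elements, as the kernel of `x ↦ x ^ q ^ 3 + x`. -/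
theorem kernels_six_three [Finite K] (hq : 2 ≤ q) (hφ : ∀ x, φ x = x ^ q)
    (hK : Nat.card K = q ^ 6) :
    Nat.card {x : K // φ (φ (φ x)) + x = 0} = q ^ 3 := by
  have h6 := frob_six hφ hK
  have h : Nat.card {x : K // φ (φ (φ x)) + x = 0} ≤ q ^ 3 := by
    have := card_zeros_le (K := K) hq 3 {0} (by simp)
    refine le_of_eq_of_le ?_ this
    refine Nat.card_congr (Equiv.subtypeEquivRight fun x => ?_)
    simp only [Finset.sum_singleton, hφ, ← pow_mul]
    ring_nf
  exact (card_kernels (fun x : K => φ (φ (φ x)) + x) (fun x => φ (φ (φ x)) + x)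
    (fun x y => by simp only [map_add]; ring)
    (fun x => by simp only [map_add, h6]; grind) h h (by rw [hK]; ring)).1

/-- The kernel of the trace from the field of `q ^ 3` elements. The complementary factor comes from
`X ^ 6 + 1 = (X ^ 2 + X + 1) (X ^ 4 + X ^ 3 + X + 1)` modulo `2`. -/
theorem kernels_six_two [Finite K] (hq : 2 ≤ q) (hφ : ∀ x, φ x = x ^ q)
    (hK : Nat.card K = q ^ 6) :
    Nat.card {x : K // x + φ x + φ (φ x) = 0} = q ^ 2 := by
  have h6 := frob_six hφ hK
  have h : Nat.card {x : K // x + φ x + φ (φ x) = 0} ≤ q ^ 2 := by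
    have := card_zeros_le (K := K) hq 2 (Finset.range 2) (by simp)
    refine le_of_eq_of_le ?_ this
    refine Nat.card_congr (Equiv.subtypeEquivRight fun x => ?_)
    simp only [Finset.sum_range_succ, Finset.sum_range_zero, hφ, ← pow_mul]
    ring_nf
  have h' : Nat.card {x : K // φ (φ (φ (φ x))) + φ (φ (φ x)) + φ x + x = 0} ≤ q ^ 4 := by
    have := card_zeros_le (K := K) hq 4 {0, 1, 3} (by simp)
    refine le_of_eq_of_le ?_ this
    refine Nat.card_congr (Equiv.subtypeEquivRight fun x => ?_)
    rw [Finset.sum_insert (by simp), Finset.sum_insert (by simp), Finset.sum_singleton]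
    simp only [hφ, ← pow_mul]
    ring_nf
  exact (card_kernels (fun x : K => x + φ x + φ (φ x))
    (fun x => φ (φ (φ (φ x))) + φ (φ (φ x)) + φ x + x)
    (fun x y => by simp only [map_add]; ring)
    (fun x => by simp only [map_add, h6]; grind) h h' (by rw [hK]; ring)).1

/-- The zeros of the quadratic form `z ↦ Tr (z ^ (q + 1))`: writing `z = a + b ω` with `ω` in the
field of `q ^ 2` elements, `φ ω = ω + 1`, and `a`, `b` in the field of `q ^ 3` elements, its value
is `Tr (a (b ^ q + b ^ (q ^ 2)))`, which is linear in `a`. -/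
theorem card_quadric [Finite K] (hq : 2 ≤ q) (hφ : ∀ x, φ x = x ^ q) (hK : Nat.card K = q ^ 6) :
    Nat.card {z : K // trSix φ (z * φ z) = 0} = q ^ 3 * q + q ^ 2 * (q ^ 3 - q) := by
  have h6 := frob_six hφ hK
  obtain ⟨h1, htr⟩ := kernels_six_one hq hφ hK
  have h3 := kernels_six_three hq hφ hK
  have ht := kernels_six_two hq hφ hK
  obtain ⟨ω, hω⟩ := htr 1 (by simp only [trSix, map_one]; grind)
  have hω' : φ ω = ω + 1 := by grind
  let L := {x : K // φ (φ (φ x)) + x = 0}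
  have hL : ∀ x : L, φ (φ (φ x.1)) = x.1 := fun x => by have := x.2; grind
  let Q : L → L → Prop := fun b a =>
    a.1 * (φ b.1 + φ (φ b.1)) + φ a.1 * (φ (φ b.1) + b.1) + φ (φ a.1) * (b.1 + φ b.1) = 0
  have hE : Nat.card {z : K // trSix φ (z * φ z) = 0} = Nat.card (Σ b : L, {a : L // Q b a}) := by
    have hform : ∀ a b : L, trSix φ ((a.1 + b.1 * ω) * φ (a.1 + b.1 * ω)) =
        a.1 * (φ b.1 + φ (φ b.1)) + φ a.1 * (φ (φ b.1) + b.1) + φ (φ a.1) * (b.1 + φ b.1) := by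
      intro a b
      simp only [trSix, map_add, map_mul, map_one, hL, hω']
      grind
    let E : L × L ≃ K := ⟨fun v => v.2.1 + v.1.1 * ω, fun z => (⟨z + φ (φ (φ z)), by
      simp only [h6, map_add]; grind⟩, ⟨z + (z + φ (φ (φ z))) * ω, by
      simp only [map_add, map_mul, map_one, h6, hω']; grind⟩), fun v => by
        have h1 := hL v.1
        have h2 := hL v.2
        have h4 : v.2.1 + v.1.1 * ω + φ (φ (φ (v.2.1 + v.1.1 * ω))) = v.1.1 := by
          simp only [map_add, map_mul, map_one, hω', h1, h2]; grind
        refine Prod.ext (Subtype.ext h4) (Subtype.ext ?_)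
        simp only [h4]
        grind, fun z => by simp only; grind⟩
    rw [← Nat.card_congr (Equiv.subtypeProdEquivSigmaSubtype Q)]
    exact (Nat.card_congr (E.subtypeEquiv fun v => by
      change Q v.1 v.2 ↔ trSix φ ((v.2.1 + v.1.1 * ω) * φ (v.2.1 + v.1.1 * ω)) = 0
      rw [hform])).symm
  have hsum : ∀ b : L, Nat.card {a : L // Q b a} = if φ b.1 + b.1 = 0 then q ^ 3 else q ^ 2 := by
    intro b
    split_ifs with hb
    · rw [← h3]
      refine Nat.card_congr (Equiv.subtypeUnivEquiv fun a => ?_)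
      have hb' : φ b.1 = b.1 := by grind
      simp only [Q, hb']
      grind
    · have hs : φ b.1 + φ (φ b.1) ≠ 0 := by
        intro h
        apply hb
        rw [← map_add] at h
        have := (map_eq_zero φ).1 h
        grind
      have hs2 : φ (φ b.1 + φ (φ b.1)) = φ (φ b.1) + b.1 := by rw [map_add, hL]
      have hs3 : φ (φ (φ b.1) + b.1) = b.1 + φ b.1 := by rw [map_add, hL]
      have hs4 : φ (b.1 + φ b.1) = φ b.1 + φ (φ b.1) := by rw [map_add]
      rw [← ht]
      generalize hsd : φ b.1 + φ (φ b.1) = s at *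
      refine Nat.card_congr ⟨fun a => ⟨a.1.1 * s, ?_⟩, fun x => ⟨⟨x.1 / s, ?_⟩, ?_⟩,
        fun a => ?_, fun x => ?_⟩
      · have := a.2
        simp only [Q, hsd] at this
        rw [map_mul, map_mul, hs2, hs3]
        exact this
      · have hx := x.2
        have hx' := congrArg φ hx
        simp only [map_add, map_zero] at hx'
        have hx3 : φ (φ (φ x.1)) = x.1 := by grind
        rw [map_div₀, map_div₀, map_div₀, hs2, hs3, hs4, hx3]
        grind
      · have h1 : φ (φ b.1) + b.1 ≠ 0 := by rw [← hs2]; exact (map_ne_zero φ).2 hs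
        have h2 : b.1 + φ b.1 ≠ 0 := by rw [← hs3]; exact (map_ne_zero φ).2 h1
        simp only [Q, hsd]
        rw [map_div₀, map_div₀, hs2, hs3, div_mul_cancel₀ _ hs, div_mul_cancel₀ _ h1,
          div_mul_cancel₀ _ h2]
        exact x.2
      · ext; exact mul_div_cancel_right₀ _ hs
      · ext; exact div_mul_cancel₀ _ hs
  have := Fintype.ofFinite K
  rw [hE, Nat.card_sigma, Finset.sum_congr rfl fun b _ => hsum b, Finset.sum_ite,
    Finset.sum_const, Finset.sum_const]
  have hfix : (Finset.univ.filter fun b : L => φ b.1 + b.1 = 0).card = q := by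
    rw [← h1, ← Nat.subtype_card (p := fun b : L => φ b.1 + b.1 = 0) _ (by simp)]
    refine Nat.card_congr ⟨fun b => ⟨b.1.1, b.2⟩, fun x => ⟨⟨x.1, ?_⟩, x.2⟩,
      fun _ => rfl, fun _ => rfl⟩
    have hx' : φ x.1 = x.1 := by have := x.2; grind
    rw [hx', hx', hx', CharTwo.add_self_eq_zero]
  have hcomp := Finset.card_filter_add_card_filter_not
    (s := (Finset.univ : Finset L)) (fun b : L => φ b.1 + b.1 = 0)
  rw [hfix, Finset.card_univ, ← Nat.card_eq_fintype_card, h3] at hcomp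
  rw [hfix, ← hcomp, Nat.add_sub_cancel_left, smul_eq_mul, smul_eq_mul]
  ring

/-- The Hermitian curve over the field with `q ^ 6` elements: `y ^ q + y = 1 + z ^ (q + 1)` is
solvable in `y` exactly when the right-hand side has trace zero over the field with `q`
elements. -/
theorem card_curve_six [Finite K] (hq : 2 ≤ q) (hφ : ∀ x, φ x = x ^ q) (hK : Nat.card K = q ^ 6) :
    Nat.card (Curve φ) = q ^ 6 + q ^ 5 - q ^ 4 := by
  have h6 := frob_six hφ hK
  obtain ⟨h1, htr⟩ := kernels_six_one hq hφ hK
  have hz : ∀ y z : K, φ y + y = 1 + z * φ z → trSix φ (z * φ z) = 0 := by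
    intro y z h
    have h' : z * φ z = 1 + φ y + y := by grind
    rw [h']
    simp only [trSix, map_add, map_one, h6]
    grind
  let f : Curve φ → {z : K // trSix φ (z * φ z) = 0} := fun v => ⟨v.1.2, hz _ _ v.2⟩
  rw [card_of_fibers f (k := q), card_quadric hq hφ hK]
  · have : q ≤ q ^ 3 := Nat.le_self_pow (by norm_num) q
    have h4 : q ^ 4 ≤ q ^ 6 + q ^ 5 := (Nat.pow_le_pow_right (by omega) (by norm_num)).trans
      (Nat.le_add_right _ _)
    zify [this, h4]
    ring
  · rintro ⟨z, hz⟩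
    rw [← card_curve_fiber (z := z) h1]
    · exact Nat.card_congr (Equiv.subtypeEquivRight fun v => Subtype.ext_iff)
    · refine htr _ ?_
      have : trSix φ (1 + z * φ z) = trSix φ 1 + trSix φ (z * φ z) := by
        simp only [trSix, map_add]; ring
      rw [this, hz]
      simp only [trSix, map_one]
      grind

end Count

/-! ### `PSU(3,q)` as a matrix group -/

theorem card_Fq2 (n : ℕ) : Nat.card (Fq2 n) = qval n ^ 2 := by
  rw [GaloisField.card 2 (2 ^ (n + 1)) (by positivity), ← pow_mul, pow_succ]

theorem star_Fq2 (n : ℕ) (x : Fq2 n) : star x = x ^ qval n := rfl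

theorem qval_mod (n : ℕ) (hn : 1 ≤ n) : qval n % 3 = 1 ∧ 4 ≤ qval n := by
  obtain ⟨k, rfl⟩ : ∃ k, n = k + 1 := ⟨n - 1, by omega⟩
  have h : qval (k + 1) = 4 ^ 2 ^ k := by
    rw [qval, pow_succ, mul_comm, pow_mul]; norm_num
  rw [h]
  constructor
  · rw [Nat.pow_mod]; norm_num
  · calc 4 = 4 ^ 1 := by norm_num
      _ ≤ 4 ^ 2 ^ k := Nat.pow_le_pow_right (by norm_num) Nat.one_le_two_pow

/-- The inclusion of `SU(3,q)` into the `3 × 3` matrices. -/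
noncomputable def suHom (n : ℕ) : SU3 n →* Matrix (Fin 3) (Fin 3) (Fq2 n) :=
  (Matrix.unitaryGroup (Fin 3) (Fq2 n)).subtype.comp (SU3 n).subtype

theorem suHom_injective (n : ℕ) : Function.Injective (suHom n) := fun _ _ h =>
  Subtype.ext (Subtype.ext h)

theorem suHom_det (n : ℕ) (g : SU3 n) : (suHom n g).det = 1 := g.2

theorem suHom_mul_star (n : ℕ) (g : SU3 n) : star (suHom n g) * suHom n g = 1 :=
  Matrix.mem_unitaryGroup_iff'.1 g.1.2

theorem exists_suHom (n : ℕ) {M : Matrix (Fin 3) (Fin 3) (Fq2 n)} (h : star M * M = 1)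
    (hdet : M.det = 1) : ∃ g, suHom n g = M :=
  ⟨⟨⟨M, Matrix.mem_unitaryGroup_iff'.2 h⟩, hdet⟩, rfl⟩

/-- A power of a generator of the multiplicative group has order `q + 1 ≥ 5`. -/
theorem exists_norm_one (n : ℕ) (hn : 1 ≤ n) :
    ∃ a : Fq2 n, a ^ (qval n + 1) = 1 ∧ a ≠ 1 ∧ a ^ 2 ≠ 1 := by
  obtain ⟨-, hq⟩ := qval_mod n hn
  obtain ⟨u, hu⟩ := IsCyclic.exists_ofOrder_eq_natCard (α := (Fq2 n)ˣ)
  have hcard : Nat.card (Fq2 n)ˣ = (qval n + 1) * (qval n - 1) := by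
    rw [Nat.card_units, card_Fq2, ← Nat.sq_sub_sq, one_pow]
  have ho : orderOf (u ^ (qval n - 1)) = qval n + 1 := by
    rw [orderOf_pow_of_dvd (by omega) (by rw [hu, hcard]; exact Dvd.intro_left _ rfl), hu, hcard,
      Nat.mul_div_cancel _ (by omega)]
  have hk : ∀ k, 0 < k → k < 5 → ((u ^ (qval n - 1) : (Fq2 n)ˣ) : Fq2 n) ^ k ≠ 1 := by
    intro k hk hk5 h
    have h2 : (u ^ (qval n - 1)) ^ k = 1 := Units.ext (by simpa using h)
    have := Nat.le_of_dvd hk (ho ▸ orderOf_dvd_of_pow_eq_one h2)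
    omega
  refine ⟨((u ^ (qval n - 1) : (Fq2 n)ˣ) : Fq2 n), ?_, ?_, hk 2 (by norm_num) (by norm_num)⟩
  · rw [← Units.val_pow_eq_pow_val, ← ho, pow_orderOf_eq_one, Units.val_one]
  · simpa using hk 1 (by norm_num) (by norm_num)

/-- Commuting with `diag(a, a⁻¹, 1)`, where `a`, `a⁻¹`, `1` are distinct, makes a central matrix
diagonal, and commuting with a cyclic permutation matrix makes it scalar. The scalar `c` satisfies
`c ^ 3 = 1 = c ^ (q + 1)`, and `q + 1` is prime to `3`. -/
theorem center_SU3 (n : ℕ) (hn : 1 ≤ n) : Subgroup.center (SU3 n) = ⊥ := by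
  rw [eq_bot_iff]
  intro z hz
  rw [Subgroup.mem_center_iff] at hz
  rw [Subgroup.mem_bot]
  obtain ⟨hq3, hq4⟩ := qval_mod n hn
  obtain ⟨a, ha, ha1, ha2⟩ := exists_norm_one n hn
  have ha0 : a ≠ 0 := by
    rintro rfl
    rw [zero_pow (by omega)] at ha
    exact zero_ne_one ha
  have hstar : star a * a = 1 := by rw [star_Fq2, ← pow_succ, ha]
  have hstar' : a * star a = 1 := by rw [mul_comm, hstar]
  obtain ⟨d, hd⟩ := exists_suHom n (M := Matrix.diagonal ![a, star a, 1])
    (by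
      rw [Matrix.star_eq_conjTranspose, Matrix.diagonal_conjTranspose, Matrix.diagonal_mul_diagonal,
        ← Matrix.diagonal_one]
      congr 1
      ext i
      fin_cases i <;> simp [hstar, hstar'])
    (by simp [Matrix.det_diagonal, Fin.prod_univ_three, hstar'])
  obtain ⟨w, hw⟩ := exists_suHom n (M := !![0, 1, 0; 0, 0, 1; 1, 0, 0])
    (by
      rw [Matrix.star_eq_conjTranspose]
      ext i j
      fin_cases i <;> fin_cases j <;> simp [Matrix.mul_apply, Fin.sum_univ_three])
    (by simp [Matrix.det_fin_three])
  have h1 := congrArg (suHom n) (hz d)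
  have h2 := congrArg (suHom n) (hz w)
  have h3 := suHom_det n z
  have h4 := suHom_mul_star n z
  apply suHom_injective n
  rw [map_mul, map_mul, hd] at h1
  rw [map_mul, map_mul, hw] at h2
  rw [map_one]
  generalize suHom n z = Z at *
  have hne1 : a ≠ star a := by
    intro h; rw [← h] at hstar; exact ha2 (by rw [sq, hstar])
  have hne2 : star a ≠ 1 := by
    intro h; rw [h, one_mul] at hstar; exact ha1 hstar
  have hoff : ∀ i j, i ≠ j → Z i j = 0 := by
    intro i j hij
    have h := congrFun (congrFun h1 i) j
    rw [Matrix.diagonal_mul, Matrix.mul_diagonal] at h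
    have h5 : (![a, star a, 1] i - ![a, star a, 1] j) * Z i j = 0 := by
      rw [sub_mul, h]; ring
    refine (mul_eq_zero.1 h5).resolve_left (sub_ne_zero.2 ?_)
    fin_cases i <;> fin_cases j <;> simp at hij ⊢
    exacts [hne1, ha1, hne1.symm, hne2, ha1.symm, hne2.symm]
  have h01 := congrFun (congrFun h2 0) 1
  have h12 := congrFun (congrFun h2 1) 2
  simp [Matrix.mul_apply, Fin.sum_univ_three] at h01 h12
  have hZ : Z = Matrix.diagonal fun _ => Z 0 0 := by
    ext i j
    by_cases hij : i = j
    · subst hij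
      rw [Matrix.diagonal_apply_eq]
      fin_cases i
      · rfl
      · exact h01
      · exact h12.trans h01
    · rw [Matrix.diagonal_apply_ne _ hij, hoff i j hij]
  generalize Z 0 0 = c at hZ
  subst hZ
  have hc3 : c ^ 3 = 1 := by
    rw [← h3]; simp [Matrix.det_diagonal]
  have hc1 : c ^ (qval n + 1) = 1 := by
    have := congrFun (congrFun h4 0) 0
    rw [Matrix.star_eq_conjTranspose, Matrix.diagonal_conjTranspose, Matrix.diagonal_mul_diagonal,
      Matrix.diagonal_apply_eq, Matrix.one_apply_eq] at this
    rw [pow_succ, ← star_Fq2]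
    exact this
  have hc2 : c ^ 2 = 1 := by
    obtain ⟨k, hk⟩ : ∃ k, qval n + 1 = 3 * k + 2 := ⟨qval n / 3, by omega⟩
    rw [hk, pow_add, pow_mul, hc3, one_pow, one_mul] at hc1
    exact hc1
  have hc : c = 1 := by
    rw [pow_succ, hc2, one_mul] at hc3; exact hc3
  rw [hc]
  exact Matrix.diagonal_one

/-- Representation of `PSU(3,q)` by matrices, available because the centre of `SU(3,q)` is
trivial: it is injective, with image the unitary matrices of determinant `1`. -/
theorem exists_psuHom (n : ℕ) (hn : 1 ≤ n) :
    ∃ ρ : PSU3 n →* Matrix (Fin 3) (Fin 3) (Fq2 n), Function.Injective ρ ∧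
      (∀ g, (ρ g).det = 1) ∧ (∀ g, star (ρ g) * ρ g = 1) ∧
      ∀ M : Matrix (Fin 3) (Fin 3) (Fq2 n), star M * M = 1 → M.det = 1 → ∃ g, ρ g = M := by
  let E : PSU3 n ≃* SU3 n :=
    (QuotientGroup.quotientMulEquivOfEq (center_SU3 n hn)).trans QuotientGroup.quotientBot
  refine ⟨(suHom n).comp E.toMonoidHom, (suHom_injective n).comp E.injective,
    fun g => suHom_det n _, fun g => suHom_mul_star n _, fun M h1 h2 => ?_⟩
  obtain ⟨g, hg⟩ := exists_suHom n h1 h2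
  exact ⟨E.symm g, by simp [hg]⟩

/-! ### Eigenvectors, Hermitian forms and isotropic points -/

/-- As `X ^ p - 1` is a product of linear factors, one of the factors `A - η` with `η ≠ 1` is
singular; otherwise `A - 1` would vanish. -/
theorem exists_eigenvector {K : Type*} [Field K] {p : ℕ} (hp : p.Prime) {ζ : K}
    (hζ : IsPrimitiveRoot ζ p) {A : Matrix (Fin 3) (Fin 3) K} (hA : A ^ p = 1) (hA1 : A ≠ 1) :
    ∃ η : K, η ^ p = 1 ∧ η ≠ 1 ∧ (A - η • 1).det = 0 := by
  by_contra! hall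
  have h1 : Polynomial.aeval A (∏ η ∈ Polynomial.nthRootsFinset p (1 : K),
      (Polynomial.X - Polynomial.C η)) = 0 := by
    rw [← Polynomial.X_pow_sub_one_eq_prod hp.pos hζ]
    simp [hA]
  have hmem : (1 : K) ∈ Polynomial.nthRootsFinset p (1 : K) := by
    rw [Polynomial.mem_nthRootsFinset hp.pos]; simp
  rw [← Finset.mul_prod_erase _ _ hmem, map_mul] at h1
  set B := Polynomial.aeval A (∏ η ∈ (Polynomial.nthRootsFinset p (1 : K)).erase 1,
      (Polynomial.X - Polynomial.C η)) with hB
  have hdet : B.det ≠ 0 := by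
    have : B.det = ∏ η ∈ (Polynomial.nthRootsFinset p (1 : K)).erase 1, (A - η • 1).det := by
      have := map_prod (Matrix.detMonoidHom.comp
        (Polynomial.aeval A : Polynomial K →ₐ[K] Matrix (Fin 3) (Fin 3) K).toRingHom.toMonoidHom)
        (fun η => Polynomial.X - Polynomial.C η)
        ((Polynomial.nthRootsFinset p (1 : K)).erase 1)
      refine this.trans (Finset.prod_congr rfl fun η _ => ?_)
      simp [Algebra.algebraMap_eq_smul_one]
    rw [this, Finset.prod_ne_zero_iff]
    intro η hη
    rw [Finset.mem_erase, Polynomial.mem_nthRootsFinset hp.pos] at hη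
    exact hall η hη.2 hη.1
  have hu : IsUnit B := (Matrix.isUnit_iff_isUnit_det B).2 (isUnit_iff_ne_zero.2 hdet)
  have h2 : Polynomial.aeval A (Polynomial.X - Polynomial.C (1 : K)) = 0 :=
    (hu.mul_left_eq_zero).1 h1
  apply hA1
  simpa [sub_eq_zero] using h2

theorem exists_mulVec_eq_smul {K : Type*} [Field K] {A : Matrix (Fin 3) (Fin 3) K} {η : K}
    (h : (A - η • 1).det = 0) : ∃ u, u ≠ 0 ∧ A.mulVec u = η • u := by
  obtain ⟨u, hu, h⟩ := Matrix.exists_mulVec_eq_zero_iff.2 h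
  refine ⟨u, hu, ?_⟩
  rwa [Matrix.sub_mulVec, Matrix.smul_mulVec, Matrix.one_mulVec, sub_eq_zero] at h

section Herm

variable {K : Type*} [Field K] {φ : K →+* K}

/-- The sesquilinear form `∑ uᵢ φ(vᵢ)`. -/
def herm (φ : K →+* K) (u v : Fin 3 → K) : K := u 0 * φ (v 0) + u 1 * φ (v 1) + u 2 * φ (v 2)

theorem herm_eq (u v : Fin 3 → K) : herm φ u v = dotProduct u (φ ∘ v) := by
  simp [herm, dotProduct, Fin.sum_univ_three]

theorem herm_smul (a b : K) (u v : Fin 3 → K) :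
    herm φ (a • u) (b • v) = a * φ b * herm φ u v := by
  simp only [herm, Pi.smul_apply, smul_eq_mul, map_mul]; ring

theorem herm_mulVec {M : Matrix (Fin 3) (Fin 3) K} (hM : M.transpose * M.map φ = 1)
    (u v : Fin 3 → K) : herm φ (M.mulVec u) (M.mulVec v) = herm φ u v := by
  rw [herm_eq, herm_eq]
  have h : φ ∘ M.mulVec v = (M.map φ).mulVec (φ ∘ v) := by
    ext i
    exact RingHom.map_mulVec φ M v i
  rw [h, ← Matrix.vecMul_transpose, ← Matrix.dotProduct_mulVec, Matrix.mulVec_mulVec, hM,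
    Matrix.one_mulVec]

theorem herm_symm (hφ2 : ∀ x, φ (φ x) = x) (u v : Fin 3 → K) : φ (herm φ u v) = herm φ v u := by
  simp only [herm, map_add, map_mul, hφ2]; ring

/-- An eigenvector of an isometry is isotropic unless its eigenvalue has norm `1`. -/
theorem isotropic_of_eigen {A : Matrix (Fin 3) (Fin 3) K} (hA : A.transpose * A.map φ = 1)
    {η : K} (hη : η * φ η ≠ 1) {u : Fin 3 → K} (h : A.mulVec u = η • u) : herm φ u u = 0 := by
  have := herm_mulVec hA u u
  rw [h, herm_smul] at this
  by_contra h0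
  exact hη (mul_right_cancel₀ h0 (this.trans (one_mul _).symm))

/-- The eigenvalues of an isometry are closed under `η ↦ φ(η)⁻¹`. -/
theorem det_sub_inv {A : Matrix (Fin 3) (Fin 3) K} (hA : A.transpose * A.map φ = 1) {η : K}
    (hη : η ≠ 0) (hdet : (A - η • 1).det = 0) : (A - (φ η)⁻¹ • 1).det = 0 := by
  have hφη : φ η ≠ 0 := (map_ne_zero φ).2 hη
  have h1 : (A.map φ - φ η • 1).det = 0 := by
    have h := congrArg φ hdet
    rw [RingHom.map_det, map_zero, map_sub] at h
    rw [← h]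
    congr 2
    ext i j
    simp [Matrix.one_apply, apply_ite φ]
  have h2 : A.transpose * (A.map φ - φ η • 1) =
      (-φ η) • (A - (φ η)⁻¹ • 1).transpose := by
    rw [mul_sub, hA, Matrix.transpose_sub, Matrix.transpose_smul, Matrix.transpose_one,
      Matrix.mul_smul, mul_one, smul_sub, smul_smul, neg_mul, mul_inv_cancel₀ hφη, neg_smul]
    simp [sub_eq_add_neg, add_comm]
  have h3 := congrArg Matrix.det h2
  rw [Matrix.det_mul, h1, mul_zero, Matrix.det_smul, Matrix.det_transpose] at h3
  exact (mul_eq_zero.1 h3.symm).resolve_left (pow_ne_zero _ (neg_ne_zero.2 hφη))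

theorem det_of_eigen {b : Fin 3 → Fin 3 → K} (hb : LinearIndependent K b)
    {M : Matrix (Fin 3) (Fin 3) K} {d : Fin 3 → K} (h : ∀ j, M.mulVec (b j) = d j • b j) :
    M.det = d 0 * d 1 * d 2 := by
  have hV : IsUnit (Matrix.of b).det := by
    rw [← Matrix.isUnit_iff_isUnit_det, ← Matrix.linearIndependent_rows_iff_isUnit]
    exact hb
  have h1 : Matrix.of b * M.transpose = Matrix.diagonal d * Matrix.of b := by
    ext j i
    have := congrFun (h j) i
    rw [Matrix.diagonal_mul, Matrix.mul_apply]
    simp only [Matrix.mulVec, dotProduct, Pi.smul_apply, smul_eq_mul] at this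
    rw [Matrix.of_apply, ← this]
    exact Finset.sum_congr rfl fun k _ => mul_comm _ _
  have h2 := congrArg Matrix.det h1
  rw [Matrix.det_mul, Matrix.det_mul, Matrix.det_transpose, Matrix.det_diagonal,
    mul_comm, Fin.prod_univ_three] at h2
  exact hV.mul_right_cancel h2

/-- Vectors with an invertible diagonal Gram matrix are linearly independent. -/
theorem linearIndependent_of_gram {b : Fin 3 → Fin 3 → K}
    (h : ∀ i j, i ≠ j → herm φ (b i) (b j) = 0) (h' : ∀ i, herm φ (b i) (b i) ≠ 0) :
    LinearIndependent K b := by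
  have h1 : Matrix.of b * ((Matrix.of b).map φ).transpose =
      Matrix.diagonal fun i => herm φ (b i) (b i) := by
    ext i j
    have hij : (Matrix.of b * ((Matrix.of b).map φ).transpose) i j = herm φ (b i) (b j) := by
      simp [Matrix.mul_apply, herm, Fin.sum_univ_three]
    rw [hij]
    by_cases hne : i = j
    · rw [hne, Matrix.diagonal_apply_eq]
    · rw [Matrix.diagonal_apply_ne _ hne, h i j hne]
  have h2 := congrArg Matrix.det h1
  rw [Matrix.det_mul, Matrix.det_diagonal] at h2
  have h3 : (Matrix.of b).det ≠ 0 := left_ne_zero_of_mul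
    (h2.trans_ne (Finset.prod_ne_zero_iff.2 fun i _ => h' i))
  have h4 : LinearIndependent K (Matrix.of b).row := by
    rwa [Matrix.linearIndependent_rows_iff_isUnit, Matrix.isUnit_iff_isUnit_det,
      isUnit_iff_ne_zero]
  exact h4

/-- Applying a field endomorphism to a matrix, an eigenvector and its eigenvalue. -/
theorem mulVec_comp (ψ : K →+* K) {M : Matrix (Fin 3) (Fin 3) K} {u : Fin 3 → K} {c : K}
    (h : M.mulVec u = c • u) : (M.map ψ).mulVec (ψ ∘ u) = ψ c • (ψ ∘ u) := by
  ext i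
  rw [← RingHom.map_mulVec, h]
  simp

/-- A matrix that is diagonal in the frame `b` preserves the form as soon as it does so on `b`. -/
theorem exists_matrix {b : Fin 3 → Fin 3 → K} (hb : LinearIndependent K b) {d : Fin 3 → K}
    (hd : ∀ i j, d i * φ (d j) * herm φ (b i) (b j) = herm φ (b i) (b j)) :
    ∃ M : Matrix (Fin 3) (Fin 3) K, M.transpose * M.map φ = 1 ∧
      ∀ j, M.mulVec (b j) = d j • b j := by
  set V := Matrix.of b with hVdef
  have hV : IsUnit V.det := by
    rw [← Matrix.isUnit_iff_isUnit_det, ← Matrix.linearIndependent_rows_iff_isUnit]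
    exact hb
  -- rows of `V` are the frame, so the matrix acts on rows by its transpose
  let N := V⁻¹ * (Matrix.diagonal d * V)
  have hN : V * N = Matrix.diagonal d * V := Matrix.mul_nonsing_inv_cancel_left _ _ hV
  refine ⟨N.transpose, ?_, fun j => ?_⟩
  · have hφV : IsUnit ((V.map φ).transpose).det := by
      rw [Matrix.det_transpose, ← RingHom.mapMatrix_apply, ← RingHom.map_det]
      exact hV.map φ
    have hV' : IsUnit V := (Matrix.isUnit_iff_isUnit_det V).2 hV
    have hφV' := (Matrix.isUnit_iff_isUnit_det _).2 hφV
    rw [Matrix.transpose_transpose]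
    apply hV'.mul_left_cancel
    apply hφV'.mul_right_cancel
    have h1 : N.transpose.map φ * (V.map φ).transpose =
        (V.map φ).transpose * Matrix.diagonal (φ ∘ d) := by
      have := congrArg (fun A : Matrix (Fin 3) (Fin 3) K => (A.map φ).transpose) hN
      simp only [Matrix.map_mul, Matrix.transpose_mul] at this
      rw [Matrix.transpose_map]
      rw [this, Matrix.diagonal_map (map_zero φ), Matrix.diagonal_transpose]
      rfl
    rw [mul_one, ← mul_assoc, hN, mul_assoc, h1, ← mul_assoc, mul_assoc (Matrix.diagonal d)]
    ext i j
    have hG : ∀ i j, (V * (V.map φ).transpose) i j = herm φ (b i) (b j) := by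
      intro i j
      simp [Matrix.mul_apply, herm, V, Fin.sum_univ_three]
    rw [Matrix.mul_diagonal, Matrix.diagonal_mul, hG]
    simp only [Function.comp]
    linear_combination hd i j
  · rw [Matrix.mulVec_transpose]
    ext i
    have := congrFun (congrFun hN j) i
    rw [Matrix.diagonal_mul, Matrix.mul_apply] at this
    simpa [Matrix.vecMul, dotProduct, V] using this

end Herm

section Points

variable {K : Type*} [Field K] {φ : K →+* K}

/-- Isotropic vectors of the Hermitian form, normalized so as to represent each isotropic point
exactly once. -/
def vec (φ : K →+* K) : Option (Curve φ) → Fin 3 → K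
  | none => ![1, 1, 0]
  | some v => ![v.1.1 + 1, v.1.1, v.1.2]

theorem vec_ne_zero (v : Option (Curve φ)) : vec φ v ≠ 0 := by
  intro h
  have h0 := congrFun h 0
  have h1 := congrFun h 1
  rcases v with _ | v
  · simp [vec] at h0
  · simp only [vec, Matrix.cons_val_zero, Matrix.cons_val_one, Pi.zero_apply] at h0 h1
    rw [h1] at h0
    simp at h0

variable [CharP K 2]

theorem vec_isotropic (v : Option (Curve φ)) : herm φ (vec φ v) (vec φ v) = 0 := by
  rcases v with _ | ⟨⟨y, z⟩, h⟩
  · simp [herm, vec, CharTwo.add_self_eq_zero]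
  · simp only [herm, vec, Matrix.cons_val, map_add, map_one]
    simp only at h
    grind

/-- Different indices give vectors on different lines. -/
theorem vec_smul {v w : Option (Curve φ)} {c : K} (h : vec φ v = c • vec φ w) : v = w := by
  have h0 := congrFun h 0
  have h1 := congrFun h 1
  have h2 := congrFun h 2
  rcases v with _ | ⟨⟨y, z⟩, hv⟩ <;> rcases w with _ | ⟨⟨y', z'⟩, hw⟩ <;>
    simp only [vec, Matrix.cons_val, Pi.smul_apply, smul_eq_mul] at h0 h1 h2
  · rfl
  · exfalso; grind
  · exfalso; grind
  · have hc : c = 1 := by grind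
    subst hc
    simp only [one_mul] at h1 h2
    subst h1 h2
    rfl

/-- Every isotropic line contains a normalized vector: if `u 0 ≠ u 1`, scale so that
`u 0 + u 1 = 1`; otherwise `u 2 = 0`. -/
theorem exists_vec {u : Fin 3 → K} (hu : u ≠ 0) (h : herm φ u u = 0) :
    ∃ c : K, c ≠ 0 ∧ ∃ v, u = c • vec φ v := by
  simp only [herm] at h
  by_cases hs : u 0 + u 1 = 0
  · have h01 : u 0 = u 1 := by grind
    have h2 : u 2 = 0 := by
      have : u 2 * φ (u 2) = 0 := by rw [h01] at h; grind
      rcases mul_eq_zero.1 this with h | h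
      · exact h
      · exact (map_eq_zero φ).1 h
    refine ⟨u 0, fun h0 => hu ?_, none, ?_⟩
    · ext i; fin_cases i
      · exact h0
      · exact h01 ▸ h0
      · exact h2
    · ext i; fin_cases i <;> simp [vec, h01, h2]
  · have hs' : φ (u 0) + φ (u 1) ≠ 0 := by rw [← map_add]; exact (map_ne_zero φ).2 hs
    refine ⟨u 0 + u 1, hs, some ⟨(u 1 / (u 0 + u 1), u 2 / (u 0 + u 1)), ?_⟩, ?_⟩
    · simp only [map_div₀, map_add]
      field_simp
      grind
    · ext i; fin_cases i
      · simp [vec]; field_simp; grind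
      · simp [vec]; field_simp
      · simp [vec]; field_simp

/-- Distinct isotropic points are never orthogonal. -/
theorem herm_vec_ne_zero (hφ2 : ∀ x, φ (φ x) = x) {v w : Option (Curve φ)} (hvw : v ≠ w) :
    herm φ (vec φ v) (vec φ w) ≠ 0 := by
  intro h
  apply hvw
  rcases v with _ | ⟨⟨y, z⟩, hv⟩ <;> rcases w with _ | ⟨⟨y', z'⟩, hw⟩ <;>
    simp only [herm, vec, Matrix.cons_val, map_add, map_one] at h
  · rfl
  · exfalso; grind
  · exfalso; grind
  · simp only at hv hw
    have h' := congrArg φ h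
    simp only [map_add, map_one, map_mul, hφ2, map_zero] at h'
    have h3 : (z + z') * φ (z + z') = 0 := by rw [map_add]; grind
    have h4 : z = z' := by
      have : z + z' = 0 := by
        rcases mul_eq_zero.1 h3 with h | h
        · exact h
        · exact (map_eq_zero φ).1 h
      grind
    subst h4
    have : y = y' := by grind
    subst this
    rfl

end Points

/-! ### Frames for `p ∣ q - 1` -/

theorem card_offDiag (α : Type*) [Finite α] :
    Nat.card {x : α × α // x.1 ≠ x.2} = Nat.card α * Nat.card α - Nat.card α := by
  have := Fintype.ofFinite α
  rw [Nat.card_eq_fintype_card, Nat.card_eq_fintype_card, Fintype.card_subtype]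
  have := Finset.offDiag_card (Finset.univ : Finset α)
  rw [Finset.card_univ] at this
  rw [← this]
  congr 1
  ext x
  simp [Finset.mem_offDiag]

section SplitFrame

variable {K : Type*} [Field K] {φ : K →+* K}

/-- The image under `φ` of the cross product (in characteristic two): when `φ` is an involution it
spans the orthogonal complement of the plane spanned by `v` and `w`. -/
def third (φ : K →+* K) (v w : Fin 3 → K) : Fin 3 → K :=
  ![φ (v 1 * w 2 + v 2 * w 1), φ (v 2 * w 0 + v 0 * w 2), φ (v 0 * w 1 + v 1 * w 0)]

theorem third_comm (v w : Fin 3 → K) : third φ w v = third φ v w := by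
  ext i
  fin_cases i <;> simp only [third] <;> simp <;> ring

variable [CharP K 2]

theorem herm_third_left (v w : Fin 3 → K) : herm φ (third φ v w) v = 0 := by
  simp only [herm, third, Matrix.cons_val, ← map_mul, ← map_add]
  rw [map_eq_zero]
  grind

theorem herm_third_right (v w : Fin 3 → K) : herm φ (third φ v w) w = 0 := by
  rw [← third_comm, herm_third_left]

/-- Binet–Cauchy identity for the Hermitian cross product, with the term `herm φ v v` vanishing. -/
theorem herm_third_self (hφ2 : ∀ x, φ (φ x) = x) {v w : Fin 3 → K} (hv : herm φ v v = 0) :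
    herm φ (third φ v w) (third φ v w) = herm φ v w * herm φ w v := by
  have h : herm φ v v * herm φ w w = 0 := by rw [hv, zero_mul]
  simp only [herm, third, Matrix.cons_val, map_add, map_mul, hφ2] at h ⊢
  grind

/-- Vectors orthogonal to both `v` and `w` are multiples of `third φ v w`. -/
theorem exists_smul_third {u v w : Fin 3 → K} (hx : third φ v w ≠ 0) (hv : herm φ u v = 0)
    (hw : herm φ u w = 0) : ∃ c : K, u = c • third φ v w := by
  have key : ∀ i j, u i * third φ v w j = u j * third φ v w i := by
    have h01 : u 0 * third φ v w 1 = u 1 * third φ v w 0 := by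
      simp only [herm, third, Matrix.cons_val, map_add, map_mul] at hv hw ⊢
      grind
    have h02 : u 0 * third φ v w 2 = u 2 * third φ v w 0 := by
      simp only [herm, third, Matrix.cons_val, map_add, map_mul] at hv hw ⊢
      grind
    have h12 : u 1 * third φ v w 2 = u 2 * third φ v w 1 := by
      simp only [herm, third, Matrix.cons_val, map_add, map_mul] at hv hw ⊢
      grind
    intro i j
    fin_cases i <;> fin_cases j
    exacts [rfl, h01, h02, h01.symm, rfl, h12, h02.symm, h12.symm, rfl]
  obtain ⟨j, hj⟩ := Function.ne_iff.1 hx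
  refine ⟨u j / third φ v w j, ?_⟩
  ext i
  have hj' : third φ v w j ≠ 0 := hj
  rw [Pi.smul_apply, smul_eq_mul, div_mul_eq_mul_div, eq_div_iff hj', key]

/-- The ordered pairs of distinct isotropic points. -/
abbrev SplitPairs (φ : K →+* K) : Type _ :=
  {x : Option (Curve φ) × Option (Curve φ) // x.1 ≠ x.2}

/-- Two isotropic points, completed to a basis by the orthogonal complement of their span. -/
def splitFrame (φ : K →+* K) (x : SplitPairs φ) : Fin 3 → Fin 3 → K :=
  ![vec φ x.1.1, vec φ x.1.2, third φ (vec φ x.1.1) (vec φ x.1.2)]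

theorem herm_third_ne_zero (hφ2 : ∀ x, φ (φ x) = x) (x : SplitPairs φ) :
    herm φ (third φ (vec φ x.1.1) (vec φ x.1.2)) (third φ (vec φ x.1.1) (vec φ x.1.2)) ≠ 0 := by
  rw [herm_third_self hφ2 (vec_isotropic _)]
  exact mul_ne_zero (herm_vec_ne_zero hφ2 x.2) (herm_vec_ne_zero hφ2 x.2.symm)

theorem third_ne_zero (hφ2 : ∀ x, φ (φ x) = x) (x : SplitPairs φ) :
    third φ (vec φ x.1.1) (vec φ x.1.2) ≠ 0 := by
  intro h
  apply herm_third_ne_zero hφ2 x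
  rw [h]
  simp [herm]

theorem splitFrame_linearIndependent (hφ2 : ∀ x, φ (φ x) = x) (x : SplitPairs φ) :
    LinearIndependent K (splitFrame φ x) := by
  have h : LinearIndependent K (Matrix.of (splitFrame φ x)).row := by
    rw [Matrix.linearIndependent_rows_iff_isUnit, Matrix.isUnit_iff_isUnit_det, isUnit_iff_ne_zero]
    convert herm_third_ne_zero hφ2 x using 1
    rw [Matrix.det_fin_three]
    simp only [splitFrame, herm, third, Matrix.of_apply, Matrix.cons_val, map_add, map_mul, hφ2]
    grind
  exact h

theorem exists_splitMatrix (hφ2 : ∀ x, φ (φ x) = x) (x : SplitPairs φ) {d : Fin 3 → K}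
    (h01 : d 0 * φ (d 1) = 1) (h22 : d 2 * φ (d 2) = 1) :
    ∃ M : Matrix (Fin 3) (Fin 3) K, M.transpose * M.map φ = 1 ∧
      ∀ j, M.mulVec (splitFrame φ x j) = d j • splitFrame φ x j := by
  have h10 : d 1 * φ (d 0) = 1 := by
    have := congrArg φ h01
    rwa [map_mul, hφ2, map_one, mul_comm] at this
  have hL := herm_third_left (φ := φ) (vec φ x.1.1) (vec φ x.1.2)
  have hR := herm_third_right (φ := φ) (vec φ x.1.1) (vec φ x.1.2)
  have hL' := herm_symm hφ2 (third φ (vec φ x.1.1) (vec φ x.1.2)) (vec φ x.1.1)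
  have hR' := herm_symm hφ2 (third φ (vec φ x.1.1) (vec φ x.1.2)) (vec φ x.1.2)
  rw [hL, map_zero] at hL'
  rw [hR, map_zero] at hR'
  refine exists_matrix (splitFrame_linearIndependent hφ2 x) fun i j => ?_
  fin_cases i <;> fin_cases j <;>
    simp [splitFrame, hL, hR, ← hL', ← hR', vec_isotropic, h01, h10, h22]

/-- Only `(v, w)` and `(w, v)` have the same three lines, as the third line is not isotropic. -/
theorem splitFrame_fiber (hφ2 : ∀ x, φ (φ x) = x) (x : SplitPairs φ) :
    Nat.card {y : SplitPairs φ // ∀ j, ∃ i, ∃ c : K, splitFrame φ y j = c • splitFrame φ x i}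
      = 2 := by
  let x' : SplitPairs φ := ⟨(x.1.2, x.1.1), x.2.symm⟩
  have hset : {y : SplitPairs φ | ∀ j, ∃ i, ∃ c : K, splitFrame φ y j = c • splitFrame φ x i}
      = {x, x'} := by
    ext y
    simp only [Set.mem_ofPred_eq, Set.mem_insert_iff, Set.mem_singleton_iff]
    constructor
    · intro h
      have hpt : ∀ v : Option (Curve φ), (∃ i, ∃ c : K, vec φ v = c • splitFrame φ x i) →
          v = x.1.1 ∨ v = x.1.2 := by
        rintro v ⟨i, c, hc⟩
        fin_cases i
        · exact Or.inl (vec_smul hc)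
        · exact Or.inr (vec_smul hc)
        · exfalso
          have hc' : vec φ v = c • third φ (vec φ x.1.1) (vec φ x.1.2) := hc
          have h0 := vec_isotropic v
          rw [hc', herm_smul] at h0
          rcases mul_eq_zero.1 h0 with h0 | h0
          · have hc0 : c = 0 := by
              rcases mul_eq_zero.1 h0 with h0 | h0
              · exact h0
              · exact (map_eq_zero φ).1 h0
            rw [hc0, zero_smul] at hc'
            exact vec_ne_zero v hc'
          · exact herm_third_ne_zero hφ2 x h0
      have hne := y.2
      rcases hpt _ (h 0) with h0 | h0 <;> rcases hpt _ (h 1) with h1 | h1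
      · exact absurd (h0.trans h1.symm) hne
      · exact Or.inl (Subtype.ext (Prod.ext h0 h1))
      · exact Or.inr (Subtype.ext (Prod.ext h0 h1))
      · exact absurd (h0.trans h1.symm) hne
    · rintro (rfl | rfl) j
      · exact ⟨j, 1, (one_smul _ _).symm⟩
      · fin_cases j
        · exact ⟨1, 1, (one_smul _ _).symm⟩
        · exact ⟨0, 1, (one_smul _ _).symm⟩
        · exact ⟨2, 1, by rw [one_smul]; exact third_comm _ _⟩
  have hne : x ≠ x' := fun h => x.2 (congrArg (fun y : SplitPairs φ => y.1.1) h)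
  calc _ = Set.ncard {y : SplitPairs φ | ∀ j, ∃ i, ∃ c : K,
        splitFrame φ y j = c • splitFrame φ x i} := Nat.card_coe_set_eq _
    _ = 2 := by rw [hset, Set.ncard_pair hne]

/-- An eigenvector with an eigenvalue of norm different from `1` is an isotropic point. -/
theorem exists_vec_of_det {A : Matrix (Fin 3) (Fin 3) K} (hA : A.transpose * A.map φ = 1)
    {η : K} (hη : η * φ η ≠ 1) (hdet : (A - η • 1).det = 0) :
    ∃ v, A.mulVec (vec φ v) = η • vec φ v := by
  obtain ⟨u, hu, h⟩ := exists_mulVec_eq_smul hdet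
  obtain ⟨c, hc, v, rfl⟩ := exists_vec hu (isotropic_of_eigen hA hη h)
  refine ⟨v, ?_⟩
  rw [Matrix.mulVec_smul, smul_comm] at h
  exact smul_right_injective _ hc h

theorem ne_one_of_odd {F : Type*} [Field F] {p : ℕ} (hp : p.Prime) (hp2 : p ≠ 2)
    {η : F} (h : η ^ p = 1) (h1 : η ≠ 1) :
    η * η ≠ 1 := by
  intro h2
  have : Fact p.Prime := ⟨hp⟩
  have ho : orderOf η = p := orderOf_eq_prime h h1
  have : p ∣ 2 := ho ▸ orderOf_dvd_of_pow_eq_one (by rw [sq, h2])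
  exact hp2 ((Nat.prime_dvd_prime_iff_eq hp Nat.prime_two).1 this)

/-- A unitary matrix of odd prime order, with the relevant roots of unity fixed by `φ`, is diagonal
in some frame. -/
theorem exists_splitFrame (hφ2 : ∀ x, φ (φ x) = x) {p : ℕ} (hp : p.Prime) (hp2 : p ≠ 2) {ζ : K}
    (hζ : IsPrimitiveRoot ζ p) (hφp : ∀ x : K, x ^ p = 1 → φ x = x)
    {A : Matrix (Fin 3) (Fin 3) K} (hA : A.transpose * A.map φ = 1) (hAp : A ^ p = 1)
    (hA1 : A ≠ 1) :
    ∃ x : SplitPairs φ, ∀ j, ∃ c : K, A.mulVec (splitFrame φ x j) = c • splitFrame φ x j := by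
  obtain ⟨η, hηp, hη1, hdet⟩ := exists_eigenvector hp hζ hAp hA1
  have hηη := ne_one_of_odd hp hp2 hηp hη1
  have hη0 : η ≠ 0 := by
    rintro rfl
    rw [zero_pow hp.ne_zero] at hηp
    exact zero_ne_one hηp
  have hφη := hφp η hηp
  have hinv : η⁻¹ * φ η⁻¹ ≠ 1 := by
    rw [map_inv₀, hφη, ← mul_inv]
    exact fun h => hηη (inv_eq_one.1 h)
  obtain ⟨v, hv⟩ := exists_vec_of_det hA (by rwa [hφη]) hdet
  obtain ⟨w, hw⟩ := exists_vec_of_det hA hinv (by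
    have := det_sub_inv hA hη0 hdet
    rwa [hφη] at this)
  have hvw : v ≠ w := by
    rintro rfl
    rw [hv] at hw
    have := smul_left_injective K (vec_ne_zero v) hw
    exact hηη (by nth_rewrite 2 [this]; exact mul_inv_cancel₀ hη0)
  let x : SplitPairs φ := ⟨(v, w), hvw⟩
  have horth : ∀ (u t : Fin 3 → K) (d : K), d ≠ 0 → A.mulVec t = d • t → herm φ u t = 0 →
      herm φ (A.mulVec u) t = 0 := by
    intro u t d hd ht h
    rw [← herm_mulVec hA, ht, ← one_smul K (A.mulVec u), herm_smul] at h
    exact (mul_eq_zero.1 h).resolve_left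
      (mul_ne_zero one_ne_zero ((map_ne_zero φ).2 hd))
  refine ⟨x, fun j => ?_⟩
  fin_cases j
  · exact ⟨η, hv⟩
  · exact ⟨η⁻¹, hw⟩
  · exact exists_smul_third (third_ne_zero hφ2 x)
      (horth _ _ _ hη0 hv (herm_third_left _ _))
      (horth _ _ _ (inv_ne_zero hη0) hw (herm_third_right _ _))

end SplitFrame

/-- Frames consisting of two isotropic points and their orthogonal complement: every subgroup of
order `p` is diagonalized by exactly two of them. -/
theorem card_sub_split {G K : Type*} [Group G] [Finite G] [Field K] [Finite K] [CharP K 2]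
    {φ : K →+* K} (hφ2 : ∀ x, φ (φ x) = x) {ρ : G →* Matrix (Fin 3) (Fin 3) K}
    (hρ : Function.Injective ρ) (hdet : ∀ g, (ρ g).det = 1)
    (hU : ∀ g, (ρ g).transpose * (ρ g).map φ = 1)
    (hsurj : ∀ M : Matrix (Fin 3) (Fin 3) K, M.transpose * M.map φ = 1 → M.det = 1 → ∃ g, ρ g = M)
    {p : ℕ} [hp : Fact p.Prime] (hp2 : p ≠ 2) {ζ : K} (hζ : IsPrimitiveRoot ζ p)
    (hφp : ∀ x : K, x ^ p = 1 → φ x = x) :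
    Nat.card (SplitPairs φ) = Nat.card {P : Subgroup G // Nat.card P = p} * 2 ∧
    ∀ g z : G, orderOf g = p → orderOf z = p → Commute g z → g ∈ Subgroup.zpowers z := by
  have hp3 : 3 ≤ p := by have := hp.out.two_le; omega
  have hζp : ζ * ζ ^ (p - 1) = 1 := by
    rw [← pow_succ', Nat.sub_add_cancel (by omega), hζ.pow_eq_one]
  refine card_sub_of_frames (e := ![1, p - 1, 0]) hρ hζ rfl ?_ (splitFrame φ)
    (splitFrame_linearIndependent hφ2) (fun x => ?_) (fun g hg => ?_) (fun g hg x hx => ?_)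
    (splitFrame_fiber hφ2)
  · intro i j hij
    have hlt : ∀ i : Fin 3, (![1, p - 1, 0] : Fin 3 → ℕ) i < p := by
      intro i; fin_cases i <;> simp <;> omega
    have := hζ.pow_inj (hlt i) (hlt j) hij
    fin_cases i <;> fin_cases j <;> simp at this ⊢ <;> omega
  · obtain ⟨M, hM, hMb⟩ := exists_splitMatrix hφ2 x
      (d := fun j => ζ ^ (![1, p - 1, 0] : Fin 3 → ℕ) j)
      (by simp [hφp ζ hζ.pow_eq_one, hζp]) (by simp)
    obtain ⟨g, rfl⟩ := hsurj M hM (by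
      rw [det_of_eigen (splitFrame_linearIndependent hφ2 x) hMb]
      simp [hζp])
    exact ⟨g, hMb⟩
  · refine exists_splitFrame hφ2 hp.out hp2 hζ hφp (hU g) ?_ ?_
    · rw [← map_pow, ← hg, pow_orderOf_eq_one, map_one]
    · intro h
      have : g = 1 := hρ (by rw [h, map_one])
      rw [this, orderOf_one] at hg
      omega
  · choose c hc using hx
    have hcp : ∀ j, c j ^ p = 1 := by
      intro j
      have h := mulVec_pow_of_eigen (hc j) p
      rw [← map_pow, hg, map_one, Matrix.one_mulVec] at h
      have hne := (splitFrame_linearIndependent hφ2 x).ne_zero j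
      exact (smul_left_injective K hne ((one_smul K _).trans h)).symm
    have h01 : c 0 * c 1 = 1 := by
      have h := herm_mulVec (hU g) (splitFrame φ x 0) (splitFrame φ x 1)
      rw [hc 0, hc 1, herm_smul, hφp _ (hcp 1)] at h
      have hne : herm φ (splitFrame φ x 0) (splitFrame φ x 1) ≠ 0 := herm_vec_ne_zero hφ2 x.2
      exact mul_right_cancel₀ hne (h.trans (one_mul _).symm)
    have h2 : c 2 = 1 := by
      have h := det_of_eigen (splitFrame_linearIndependent hφ2 x) hc
      rw [hdet, h01, one_mul] at h
      exact h.symm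
    have h1 : c 1 = c 0 ^ (p - 1) := by
      have h0 : c 0 * c 0 ^ (p - 1) = 1 := by
        rw [← pow_succ', Nat.sub_add_cancel (by omega), hcp]
      exact mul_left_cancel₀ (left_ne_zero_of_mul_eq_one h01) (h01.trans h0.symm)
    refine ⟨c 0, hcp 0, fun j => ?_⟩
    rw [hc j]
    fin_cases j
    · simp
    · simp [h1]
    · simp [h2]

/-! ### Frames for `p ∣ q² - q + 1` -/

section CubicFrame

variable {K : Type*} [Field K] {φ : K →+* K}

/-- The points of the curve that are not defined over the fixed field of `φ²`. -/
abbrev CubicPoints (φ : K →+* K) : Type _ :=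
  {v : Curve φ // ¬ (φ (φ v.1.1) = v.1.1 ∧ φ (φ v.1.2) = v.1.2)}

/-- The action of `φ²` on points. -/
def conjPoint (φ : K →+* K) (v : CubicPoints φ) : CubicPoints φ :=
  ⟨⟨(φ (φ v.1.1.1), φ (φ v.1.1.2)), by
      have h := congrArg (fun x => φ (φ x)) v.1.2
      simpa only [map_add, map_one, map_mul] using h⟩,
    fun h => v.2 ⟨φ.injective (φ.injective h.1), φ.injective (φ.injective h.2)⟩⟩

theorem conjPoint_three (hφ6 : ∀ x, φ (φ (φ (φ (φ (φ x))))) = x) (v : CubicPoints φ) :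
    conjPoint φ (conjPoint φ (conjPoint φ v)) = v :=
  Subtype.ext (Subtype.ext (Prod.ext (hφ6 _) (hφ6 _)))

theorem conjPoint_ne (v : CubicPoints φ) : conjPoint φ v ≠ v := fun h =>
  v.2 ⟨congrArg (fun w : CubicPoints φ => w.1.1.1) h, congrArg (fun w : CubicPoints φ => w.1.1.2) h⟩

theorem vec_conjPoint (v : CubicPoints φ) :
    vec φ (some (conjPoint φ v).1) = φ.comp φ ∘ vec φ (some v.1) := by
  ext i
  fin_cases i <;> simp [vec, conjPoint]

/-- A point together with its two conjugates under `φ²`. -/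
def cubicFrame (φ : K →+* K) (v : CubicPoints φ) : Fin 3 → Fin 3 → K :=
  ![vec φ (some v.1), vec φ (some (conjPoint φ v).1),
    vec φ (some (conjPoint φ (conjPoint φ v)).1)]

theorem cubicFrame_conjPoint (hφ6 : ∀ x, φ (φ (φ (φ (φ (φ x))))) = x) (v : CubicPoints φ)
    (j : Fin 3) : cubicFrame φ (conjPoint φ v) j = cubicFrame φ v (j + 1) := by
  fin_cases j
  · rfl
  · rfl
  · exact congrArg (fun w : CubicPoints φ => vec φ (some w.1)) (conjPoint_three hφ6 v)

theorem cubicFrame_comp (v : CubicPoints φ) (j : Fin 3) :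
    φ.comp φ ∘ cubicFrame φ v j = cubicFrame φ (conjPoint φ v) j := by
  fin_cases j <;> exact (vec_conjPoint _).symm

/-- The points of the curve over `K` are the points over the fixed field `F` of `φ²`, embedded by
`ι`, together with the `CubicPoints`. -/
theorem card_cubicPoints [Finite K] {F : Type*} [Field F] {φF : F →+* F} {ι : F →+* K}
    (hι : ∀ x, ι (φF x) = φ (ι x)) (hfix : ∀ x, φ (φ x) = x ↔ ∃ y, ι y = x) :
    Nat.card (Curve φ) = Nat.card (Curve φF) + Nat.card (CubicPoints φ) := by
  have h1 : Nat.card (Curve φF) =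
      Nat.card {v : Curve φ // φ (φ v.1.1) = v.1.1 ∧ φ (φ v.1.2) = v.1.2} := by
    refine Nat.card_congr (Equiv.ofBijective (fun v => ⟨⟨(ι v.1.1, ι v.1.2), ?_⟩, ?_⟩) ⟨?_, ?_⟩)
    · have := congrArg ι v.2
      simpa only [map_add, map_one, map_mul, hι] using this
    · exact ⟨(hfix _).2 ⟨_, rfl⟩, (hfix _).2 ⟨_, rfl⟩⟩
    · intro v w h
      have ha := congrArg (fun w => w.1.1.1) h
      have hb := congrArg (fun w => w.1.1.2) h
      exact Subtype.ext (Prod.ext (ι.injective ha) (ι.injective hb))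
    · rintro ⟨⟨⟨y, z⟩, h⟩, hy, hz⟩
      obtain ⟨y', rfl⟩ := (hfix _).1 hy
      obtain ⟨z', rfl⟩ := (hfix _).1 hz
      refine ⟨⟨(y', z'), ι.injective ?_⟩, rfl⟩
      simpa only [map_add, map_one, map_mul, hι] using h
  rw [h1, ← Nat.card_sum]
  exact Nat.card_congr (Equiv.sumCompl _).symm

variable [CharP K 2]

/-- The Gram matrix of the frame with respect to the form attached to `φ³` is diagonal. -/
theorem herm_cubicFrame (hφ6 : ∀ x, φ (φ (φ (φ (φ (φ x))))) = x) (v : CubicPoints φ)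
    (i j : Fin 3) (hij : i ≠ j) :
    herm (φ.comp (φ.comp φ)) (cubicFrame φ v i) (cubicFrame φ v j) = 0 := by
  obtain ⟨⟨⟨y, z⟩, h⟩, hv⟩ := v
  have h1 := congrArg φ h
  have h2 := congrArg φ h1
  have h3 := congrArg φ h2
  have h4 := congrArg φ h3
  have h5 := congrArg φ h4
  simp only [map_add, map_mul, map_one, hφ6] at h h1 h2 h3 h4 h5
  fin_cases i <;> fin_cases j <;>
    first
    | exact absurd rfl hij
    | (simp only [herm, cubicFrame, conjPoint, vec, Matrix.cons_val, RingHom.comp_apply, map_add,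
        map_one, hφ6, Fin.mk_one, Fin.zero_eta, Fin.reduceFinMk]
       grind)

/-- If `∑ uᵢ φ³(uᵢ)` vanished, then `u` and `φ²(u)` would both be orthogonal to `φ(u)` and `φ³(u)`
for the bilinear form `∑ xᵢ yᵢ`. The difference `t = u - φ²(u)` would satisfy `∑ tᵢ φ(tᵢ) = 0`, and
as its first two coordinates agree, its last one would vanish; then so would the others. -/
theorem herm_cubic_ne_zero (v : CubicPoints φ) :
    herm (φ.comp (φ.comp φ)) (vec φ (some v.1)) (vec φ (some v.1)) ≠ 0 := by
  obtain ⟨⟨⟨y, z⟩, h⟩, hv⟩ := v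
  intro ha
  apply hv
  have h1 := congrArg φ h
  have h2 := congrArg φ h1
  simp only [herm, vec, Matrix.cons_val, RingHom.comp_apply, map_add, map_one, map_mul]
    at h h1 h2 ha ⊢
  have h3 : (z + φ (φ z)) * φ (z + φ (φ z)) = 0 := by
    rw [map_add]
    grind
  have h4 : z + φ (φ z) = 0 := by
    rcases mul_eq_zero.1 h3 with h | h
    · exact h
    · exact (map_eq_zero φ).1 h
  have hz : φ (φ z) = z := by grind
  refine ⟨?_, hz⟩
  rw [hz] at h2 ha
  apply φ.injective
  grind

theorem herm_cubicFrame_self (v : CubicPoints φ) (i : Fin 3) :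
    herm (φ.comp (φ.comp φ)) (cubicFrame φ v i) (cubicFrame φ v i) ≠ 0 := by
  fin_cases i
  · exact herm_cubic_ne_zero v
  · exact herm_cubic_ne_zero (conjPoint φ v)
  · exact herm_cubic_ne_zero (conjPoint φ (conjPoint φ v))

theorem cubicFrame_linearIndependent (hφ6 : ∀ x, φ (φ (φ (φ (φ (φ x))))) = x)
    (v : CubicPoints φ) : LinearIndependent K (cubicFrame φ v) :=
  linearIndependent_of_gram (herm_cubicFrame hφ6 v) (herm_cubicFrame_self v)

/-- Only the three conjugates of a point have the same three lines. -/
theorem cubicFrame_fiber (hφ6 : ∀ x, φ (φ (φ (φ (φ (φ x))))) = x) (x : CubicPoints φ) :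
    Nat.card {y : CubicPoints φ // ∀ j, ∃ i, ∃ c : K, cubicFrame φ y j = c • cubicFrame φ x i}
      = 3 := by
  have hset : {y : CubicPoints φ | ∀ j, ∃ i, ∃ c : K, cubicFrame φ y j = c • cubicFrame φ x i}
      = {x, conjPoint φ x, conjPoint φ (conjPoint φ x)} := by
    ext y
    simp only [Set.mem_ofPred_eq, Set.mem_insert_iff, Set.mem_singleton_iff]
    constructor
    · intro h
      obtain ⟨i, c, hc⟩ := h 0
      have hpt : ∀ w : CubicPoints φ, vec φ (some y.1) = c • vec φ (some w.1) → y = w :=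
        fun w hw => Subtype.ext (Option.some_injective _ (vec_smul hw))
      fin_cases i
      · exact Or.inl (hpt _ hc)
      · exact Or.inr (Or.inl (hpt _ hc))
      · exact Or.inr (Or.inr (hpt _ hc))
    · rintro (rfl | rfl | rfl) j
      · exact ⟨j, 1, (one_smul _ _).symm⟩
      · exact ⟨j + 1, 1, by rw [one_smul, cubicFrame_conjPoint hφ6]⟩
      · exact ⟨j + 1 + 1, 1, by rw [one_smul, cubicFrame_conjPoint hφ6, cubicFrame_conjPoint hφ6]⟩
  have h1 : x ≠ conjPoint φ x := (conjPoint_ne x).symm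
  have h2 : conjPoint φ x ≠ conjPoint φ (conjPoint φ x) := (conjPoint_ne _).symm
  have h3 : x ≠ conjPoint φ (conjPoint φ x) := by
    intro h
    have := congrArg (conjPoint φ) h
    rw [conjPoint_three hφ6] at this
    exact h1 this.symm
  calc _ = Set.ncard {y : CubicPoints φ | ∀ j, ∃ i, ∃ c : K,
        cubicFrame φ y j = c • cubicFrame φ x i} := Nat.card_coe_set_eq _
    _ = 3 := by
      rw [hset]
      exact Set.ncard_eq_three.2 ⟨_, _, _, h1, h3, h2, rfl⟩

/-- Existence of isometries, rational over the fixed field of `φ²`, with prescribed eigenvalues on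
a conjugate frame. -/
theorem exists_cubicMatrix (hφ6 : ∀ x, φ (φ (φ (φ (φ (φ x))))) = x) (x : CubicPoints φ) {a : K}
    (ha : a * φ (φ (φ a)) = 1) :
    ∃ M : Matrix (Fin 3) (Fin 3) K, M.map (φ.comp φ) = M ∧ M.transpose * M.map φ = 1 ∧
      ∀ j, M.mulVec (cubicFrame φ x j) =
        (![a, φ (φ a), φ (φ (φ (φ a)))] : Fin 3 → K) j • cubicFrame φ x j := by
  have hb := cubicFrame_linearIndependent hφ6 x
  obtain ⟨M, hM, hMb⟩ := exists_matrix (φ := φ.comp (φ.comp φ)) hb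
    (d := ![a, φ (φ a), φ (φ (φ (φ a)))]) (by
      intro i j
      by_cases hij : i = j
      · subst hij
        have h2 := congrArg (fun t => φ (φ t)) ha
        have h4 := congrArg (fun t => φ (φ t)) h2
        simp only [map_mul, map_one] at h2 h4
        rw [mul_eq_right₀ (herm_cubicFrame_self x i)]
        fin_cases i
        · exact ha
        · exact h2
        · exact h4
      · rw [herm_cubicFrame hφ6 x i j hij, mul_zero])
  have hfix : M.map (φ.comp φ) = M := by
    refine matrix_ext_of_basis hb fun j => ?_
    obtain ⟨k, rfl⟩ : ∃ k : Fin 3, j = k + 1 := ⟨j - 1, by simp⟩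
    have h := mulVec_comp (φ.comp φ) (hMb k)
    rw [cubicFrame_comp, cubicFrame_conjPoint hφ6] at h
    rw [h, hMb (k + 1)]
    congr 1
    fin_cases k
    · rfl
    · rfl
    · exact hφ6 a
  refine ⟨M, hfix, ?_, hMb⟩
  have : M.map (φ.comp (φ.comp φ)) = (M.map (φ.comp φ)).map φ := by
    ext i j; rfl
  rwa [this, hfix] at hM

end CubicFrame

/-- Frames consisting of a point of degree three and its conjugates: every subgroup of order `p` is
diagonalized by exactly three of them. -/
theorem card_sub_cubic {G K : Type*} [Group G] [Finite G] [Field K] [Finite K] [CharP K 2]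
    {φ : K →+* K} {q : ℕ} (hφ : ∀ x, φ x = x ^ q)
    (hφ6 : ∀ x, φ (φ (φ (φ (φ (φ x))))) = x) {ρ : G →* Matrix (Fin 3) (Fin 3) K}
    (hρ : Function.Injective ρ) (hfix : ∀ g, (ρ g).map (φ.comp φ) = ρ g)
    (hU : ∀ g, (ρ g).transpose * (ρ g).map φ = 1)
    (hsurj : ∀ M : Matrix (Fin 3) (Fin 3) K, M.map (φ.comp φ) = M → M.transpose * M.map φ = 1 →
      M.det = 1 → ∃ g, ρ g = M)
    {p : ℕ} [hp : Fact p.Prime] {ζ : K} (hζ : IsPrimitiveRoot ζ p)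
    (hp1 : ∀ x : K, x ^ p = 1 → x * φ x = 1 → x = 1)
    (hp2 : ∀ x : K, x ^ p = 1 → φ (φ x) = x → x = 1)
    (hp3 : ∀ x : K, x ^ p = 1 → x * φ (φ (φ x)) = 1)
    (hp4 : ∀ x : K, x ^ p = 1 → x * φ (φ x) * φ (φ (φ (φ x))) = 1) :
    Nat.card (CubicPoints φ) = Nat.card {P : Subgroup G // Nat.card P = p} * 3 ∧
    ∀ g z : G, orderOf g = p → orderOf z = p → Commute g z → g ∈ Subgroup.zpowers z := by
  have hζ1 : ζ ≠ 1 := hζ.ne_one hp.out.one_lt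
  have hpow : ∀ (c : K) (j : Fin 3), c ^ (![1, q ^ 2, q ^ 4] : Fin 3 → ℕ) j =
      (![c, φ (φ c), φ (φ (φ (φ c)))] : Fin 3 → K) j := by
    intro c j
    fin_cases j
    · exact pow_one c
    · simp only [hφ, ← pow_mul]; simp; congr 1; ring
    · simp only [hφ, ← pow_mul]; simp; congr 1; ring
  have hconj : ∀ (g : G) (x : CubicPoints φ) (c : K),
      (ρ g).mulVec (vec φ (some x.1)) = c • vec φ (some x.1) →
      (ρ g).mulVec (vec φ (some (conjPoint φ x).1)) =
        φ (φ c) • vec φ (some (conjPoint φ x).1) := by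
    intro g x c h
    have := mulVec_comp (φ.comp φ) h
    rwa [hfix, ← vec_conjPoint] at this
  refine card_sub_of_frames (e := ![1, q ^ 2, q ^ 4]) hρ hζ rfl ?_ (cubicFrame φ)
    (cubicFrame_linearIndependent hφ6) (fun x => ?_) (fun g hg => ?_) (fun g hg x hx => ?_)
    (cubicFrame_fiber hφ6)
  · have hne : φ (φ ζ) ≠ ζ := fun h => hζ1 (hp2 ζ hζ.pow_eq_one h)
    have hne4 : φ (φ (φ (φ ζ))) ≠ ζ := by
      intro h
      have := congrArg (fun t => φ (φ t)) h
      simp only [hφ6] at this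
      exact hne this.symm
    have hne24 : φ (φ (φ (φ ζ))) ≠ φ (φ ζ) := fun h => hne (φ.injective (φ.injective h))
    intro i j hij
    simp only [hpow] at hij
    fin_cases i <;> fin_cases j
    exacts [rfl, absurd hij.symm hne, absurd hij.symm hne4, absurd hij hne, rfl,
      absurd hij.symm hne24, absurd hij hne4, absurd hij hne24, rfl]
  · obtain ⟨M, hM1, hM2, hMb⟩ := exists_cubicMatrix hφ6 x (hp3 ζ hζ.pow_eq_one)
    obtain ⟨g, rfl⟩ := hsurj M hM1 hM2 (by
      rw [det_of_eigen (cubicFrame_linearIndependent hφ6 x) hMb]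
      exact hp4 ζ hζ.pow_eq_one)
    exact ⟨g, fun j => by rw [hpow]; exact hMb j⟩
  · have hA : ρ g ^ p = 1 := by rw [← map_pow, ← hg, pow_orderOf_eq_one, map_one]
    have hA1 : ρ g ≠ 1 := by
      intro h
      have h1 : g = 1 := hρ (by rw [h, map_one])
      rw [h1, orderOf_one] at hg
      exact hp.out.one_lt.ne hg
    obtain ⟨η, hηp, hη1, hdet⟩ := exists_eigenvector hp.out hζ hA hA1
    obtain ⟨v, hv⟩ := exists_vec_of_det (hU g) (fun h => hη1 (hp1 η hηp h)) hdet
    -- a rational eigenvector would have a rational eigenvalue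
    have hrat : φ.comp φ ∘ vec φ v ≠ vec φ v := by
      intro h
      have h1 := mulVec_comp (φ.comp φ) hv
      rw [hfix, h, hv] at h1
      exact hη1 (hp2 η hηp (smul_left_injective K (vec_ne_zero v) h1).symm)
    obtain ⟨w, rfl⟩ : ∃ w, v = some w := by
      rcases v with _ | w
      · refine absurd ?_ hrat
        ext i
        fin_cases i <;> simp [vec]
      · exact ⟨w, rfl⟩
    have hw : ¬ (φ (φ w.1.1) = w.1.1 ∧ φ (φ w.1.2) = w.1.2) := by
      rintro ⟨h1, h2⟩
      refine hrat ?_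
      ext i
      fin_cases i <;> simp [vec, h1, h2]
    refine ⟨⟨w, hw⟩, fun j => ?_⟩
    fin_cases j
    · exact ⟨_, hv⟩
    · exact ⟨_, hconj g ⟨w, hw⟩ _ hv⟩
    · exact ⟨_, hconj g _ _ (hconj g ⟨w, hw⟩ _ hv)⟩
  · obtain ⟨c, hc⟩ := hx 0
    have hcp : c ^ p = 1 := by
      have h := mulVec_pow_of_eigen hc p
      rw [← map_pow, hg, map_one, Matrix.one_mulVec] at h
      exact (smul_left_injective K (vec_ne_zero (some x.1)) ((one_smul K _).trans h)).symm
    refine ⟨c, hcp, fun j => ?_⟩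
    rw [hpow]
    fin_cases j
    · exact hc
    · exact hconj g x c hc
    · exact hconj g _ _ (hconj g x c hc)

/-! ### Roots of unity and the two counts -/

theorem star_mul_self_iff {n : ℕ} {M : Matrix (Fin 3) (Fin 3) (Fq2 n)} :
    star M * M = 1 ↔ M.transpose * M.map (starRingEnd (Fq2 n)) = 1 := by
  have h : (star M * M).transpose = M.transpose * M.map (starRingEnd (Fq2 n)) := by
    rw [Matrix.transpose_mul]
    rfl
  rw [← h, Matrix.transpose_eq_one]

theorem exists_primitiveRoot {K : Type*} [Field K] [Finite K] {p : ℕ} (hp : p ∣ Nat.card K - 1) :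
    ∃ ζ : K, IsPrimitiveRoot ζ p := by
  obtain ⟨u, hu⟩ := IsCyclic.exists_ofOrder_eq_natCard (α := Kˣ)
  obtain ⟨k, hk⟩ := hp
  rw [← Nat.card_units, mul_comm] at hk
  have h := (IsPrimitiveRoot.orderOf u).pow (hu ▸ Nat.card_pos) (hu.trans hk)
  exact ⟨_, IsPrimitiveRoot.coe_units_iff.2 h⟩

theorem prime_dvd_factors {p q : ℕ} (hq : 4 ≤ q) (h : p ∣ q ^ 2 - q + 1) : p ∣ q ^ 6 - 1 := by
  obtain ⟨t, rfl⟩ : ∃ t, q = t + 4 := ⟨q - 4, by omega⟩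
  refine h.trans ⟨((t + 4) + 1) * ((t + 4) ^ 3 - 1), ?_⟩
  have h1 : (t + 4) ≤ (t + 4) ^ 2 := Nat.le_self_pow two_ne_zero _
  have h2 : 1 ≤ (t + 4) ^ 3 := Nat.one_le_pow _ _ (by omega)
  have h3 : 1 ≤ (t + 4) ^ 6 := Nat.one_le_pow _ _ (by omega)
  zify [h1, h2, h3]
  ring

section Roots

variable {K : Type*} [Field K] {φ : K →+* K} {q : ℕ} {x : K}

/-- For `q ≡ 1 mod 3` the only cube root of unity whose order divides `q² - q + 1` is `1`. -/
theorem eq_one_of_cube (h3 : q % 3 = 1) (hx : x ^ (q ^ 2 - q + 1) = 1) (hc : x ^ 3 = 1) :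
    x = 1 := by
  obtain ⟨k, rfl⟩ : ∃ k, q = 3 * k + 1 := ⟨q / 3, by omega⟩
  have h : (3 * k + 1) ^ 2 - (3 * k + 1) + 1 = 3 * (3 * k ^ 2 + k) + 1 := by
    have : (3 * k + 1) ^ 2 = (3 * (3 * k ^ 2 + k)) + (3 * k + 1) := by ring
    omega
  rw [h, pow_succ, pow_mul, hc, one_pow, one_mul] at hx
  exact hx

/-- The order of `x` divides `q² - q + 1`, and so `x ^ (q² + 1) = x ^ q`. -/
theorem pow_sq_mul (hφ : ∀ x, φ x = x ^ q) (hx : x ^ (q ^ 2 - q + 1) = 1) :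
    φ (φ x) * x = φ x := by
  have h1 : q ≤ q ^ 2 := Nat.le_self_pow two_ne_zero _
  have h2 : q * q + 1 = (q ^ 2 - q + 1) + q := by rw [← sq]; omega
  rw [hφ, hφ, ← pow_mul, ← pow_succ, h2, pow_add, hx, one_mul]

/-- A nontrivial eigenvalue does not have norm `1`, so that its eigenvector is isotropic. -/
theorem root_norm (h3 : q % 3 = 1) (hφ : ∀ x, φ x = x ^ q) (hx : x ^ (q ^ 2 - q + 1) = 1)
    (h : x * φ x = 1) : x = 1 := by
  have h1 := pow_sq_mul hφ hx
  have h2 := congrArg φ h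
  rw [map_mul, map_one] at h2
  refine eq_one_of_cube h3 hx ?_
  grind

/-- A nontrivial eigenvalue does not lie in the field of `q²` elements. -/
theorem root_fixed (h3 : q % 3 = 1) (hφ : ∀ x, φ x = x ^ q) (hx : x ^ (q ^ 2 - q + 1) = 1)
    (h : φ (φ x) = x) : x = 1 := by
  have h1 := pow_sq_mul hφ hx
  have h2 := congrArg φ h1
  have hx0 : x ≠ 0 := by
    rintro rfl
    rw [zero_pow (by omega)] at hx
    exact zero_ne_one hx
  rw [map_mul, h] at h2
  refine eq_one_of_cube h3 hx ?_
  rw [h] at h1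
  rw [← h1] at h2
  apply mul_left_cancel₀ hx0
  linear_combination h2

/-- The order of `x` divides `q³ + 1 = (q² - q + 1) (q + 1)`. -/
theorem root_cube (hφ : ∀ x, φ x = x ^ q) (hx : x ^ (q ^ 2 - q + 1) = 1) :
    x * φ (φ (φ x)) = 1 := by
  have h1 : q ≤ q ^ 2 := Nat.le_self_pow two_ne_zero _
  have h2 : q * q * q + 1 = (q ^ 2 - q + 1) * (q + 1) := by
    zify [h1]; ring
  simp only [hφ, ← pow_mul]
  rw [← pow_succ', h2, pow_mul, hx, one_pow]

/-- The product of the conjugates of `x` is `1`, because `q² - q + 1` divides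
`q⁴ + q² + 1 = (q² - q + 1) (q² + q + 1)`. -/
theorem root_trace (hφ : ∀ x, φ x = x ^ q) (hx : x ^ (q ^ 2 - q + 1) = 1) :
    x * φ (φ x) * φ (φ (φ (φ x))) = 1 := by
  have h1 : q ≤ q ^ 2 := Nat.le_self_pow two_ne_zero _
  have h2 : q * q + 1 + q * q * q * q = (q ^ 2 - q + 1) * (q ^ 2 + q + 1) := by
    zify [h1]; ring
  simp only [hφ, ← pow_mul]
  rw [← pow_succ', ← pow_add, h2, pow_mul, hx, one_pow]

end Roots

/-- The count for `p ∣ q - 1`: the `p`-th roots of unity lie in the field of `q` elements, and the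
frames are the ordered pairs of distinct points among `q³ + 1`. -/
theorem card_sub_PSU3_split (n : ℕ) (hn : 1 ≤ n) {p : ℕ} [hp : Fact p.Prime]
    (h : p ∣ qval n - 1) :
    (qval n ^ 3 + 1) * qval n ^ 3 = Nat.card {P : Subgroup (PSU3 n) // Nat.card P = p} * 2 ∧
    ∀ g z : PSU3 n, orderOf g = p → orderOf z = p → Commute g z → g ∈ Subgroup.zpowers z := by
  obtain ⟨h3, h4⟩ := qval_mod n hn
  obtain ⟨ρ, hρ, hdet, hU, hsurj⟩ := exists_psuHom n hn
  have hφ : ∀ x, starRingEnd (Fq2 n) x = x ^ qval n := fun x => rfl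
  have hφ2 : ∀ x, starRingEnd (Fq2 n) (starRingEnd (Fq2 n) x) = x := fun x => star_star x
  have hp2 : p ≠ 2 := by
    rintro rfl
    have : 2 ∣ qval n := dvd_pow_self 2 (by positivity)
    omega
  obtain ⟨ζ, hζ⟩ : ∃ ζ : Fq2 n, IsPrimitiveRoot ζ p := by
    refine exists_primitiveRoot (h.trans ⟨qval n + 1, ?_⟩)
    rw [card_Fq2, mul_comm, ← Nat.sq_sub_sq, one_pow]
  have hφp : ∀ x : Fq2 n, x ^ p = 1 → starRingEnd (Fq2 n) x = x := by
    intro x hx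
    obtain ⟨k, hk⟩ := h
    have hq : qval n = p * k + 1 := by omega
    rw [hφ, hq, pow_succ, pow_mul, hx, one_pow, one_mul]
  obtain ⟨h1, h2⟩ := card_sub_split hφ2 hρ hdet (fun g => star_mul_self_iff.1 (hU g))
    (fun M hM => hsurj M (star_mul_self_iff.2 hM)) hp2 hζ hφp
  refine ⟨?_, h2⟩
  rw [← h1, card_offDiag, Finite.card_option,
    card_curve_two (by omega) hφ (card_Fq2 n) hφ2]
  rw [← Nat.sub_one_mul]
  simp [mul_comm]

/-- The count for `p ∣ q² - q + 1`, over the extension of degree three of the field of `q²`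
elements: the frames are the points of the affine curve that are not rational. -/
theorem card_sub_PSU3_cubic (n : ℕ) (hn : 1 ≤ n) {p : ℕ} [hp : Fact p.Prime]
    (h : p ∣ qval n ^ 2 - qval n + 1) :
    qval n ^ 6 + qval n ^ 5 - qval n ^ 4 =
      qval n ^ 3 + Nat.card {P : Subgroup (PSU3 n) // Nat.card P = p} * 3 ∧
    ∀ g z : PSU3 n, orderOf g = p → orderOf z = p → Commute g z → g ∈ Subgroup.zpowers z := by
  obtain ⟨h3, h4⟩ := qval_mod n hn
  obtain ⟨ρ, hρ, hdet, hU, hsurj⟩ := exists_psuHom n hn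
  let K := FiniteField.Extension (Fq2 n) 2 3
  let ι : Fq2 n →+* K := algebraMap (Fq2 n) K
  have : CharP K 2 := charP_of_injective_algebraMap ι.injective 2
  let φ : K →+* K := iterateFrobenius K 2 (2 ^ n)
  have hφ : ∀ x, φ x = x ^ qval n := fun x => iterateFrobenius_def 2 (2 ^ n) x
  have hK : Nat.card K = qval n ^ 6 := by
    rw [FiniteField.natCard_extension, card_Fq2, ← pow_mul]
  have hφ6 := frob_six hφ hK
  have hι : ∀ x, ι (starRingEnd (Fq2 n) x) = φ (ι x) := fun x => by
    rw [hφ, ← map_pow]; rfl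
  have hfixι : ∀ y, φ (φ (ι y)) = ι y := fun y => by
    rw [← hι, ← hι, starRingEnd_self_apply]
  -- the fixed field of `φ²` has at most `q²` elements, hence is the image of `ι`
  have hfix : ∀ x, φ (φ x) = x ↔ ∃ y, ι y = x := by
    have hle := card_zeros_le (K := K) (q := qval n) (by omega) 2 {0} (by simp)
    have hb := Function.Injective.bijective_of_nat_card_le
      (f := fun y : Fq2 n => (⟨ι y, by
        have := hfixι y
        rw [hφ, hφ, ← pow_mul, ← sq] at this
        simp [this, CharTwo.add_self_eq_zero]⟩ :
          {x : K // x ^ qval n ^ 2 + ∑ i ∈ {0}, x ^ qval n ^ i = 0}))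
      (fun a b hab => ι.injective (congrArg Subtype.val hab)) (hle.trans (card_Fq2 n).ge)
    refine fun x => ⟨fun hx => ?_, ?_⟩
    · rw [hφ, hφ, ← pow_mul, ← sq] at hx
      obtain ⟨y, hy⟩ := hb.2 ⟨x, by simp [hx, CharTwo.add_self_eq_zero]⟩
      exact ⟨y, congrArg Subtype.val hy⟩
    · rintro ⟨y, rfl⟩
      exact hfixι y
  have hmap : ∀ M : Matrix (Fin 3) (Fin 3) (Fq2 n),
      (M.map ι).transpose * (M.map ι).map φ =
        (M.transpose * M.map (starRingEnd (Fq2 n))).map ι := by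
    intro M
    rw [Matrix.map_mul, Matrix.transpose_map, Matrix.map_map, Matrix.map_map]
    congr 1
    ext i j
    exact (hι _).symm
  obtain ⟨ζ, hζ⟩ : ∃ ζ : K, IsPrimitiveRoot ζ p :=
    exists_primitiveRoot (hK ▸ prime_dvd_factors h4 h)
  have hr : ∀ x : K, x ^ p = 1 → x ^ (qval n ^ 2 - qval n + 1) = 1 := by
    intro x hx
    obtain ⟨k, hk⟩ := h
    rw [hk, pow_mul, hx, one_pow]
  obtain ⟨h1, h2⟩ := card_sub_cubic (G := PSU3 n)
    (ρ := (ι.mapMatrix (m := Fin 3)).toMonoidHom.comp ρ) hφ hφ6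
    (fun a b hab => hρ (Matrix.map_injective ι.injective hab))
    (fun g => by
      ext i j
      exact hfixι _)
    (fun g => by
      refine (hmap (ρ g)).trans ?_
      rw [star_mul_self_iff.1 (hU g)]
      exact map_one ι.mapMatrix)
    (fun M hM1 hM2 hM3 => by
      have hex : ∀ i j, ∃ y, ι y = M i j := fun i j =>
        (hfix _).1 (congrFun (congrFun hM1 i) j)
      choose N hN using hex
      obtain rfl : (Matrix.of N).map ι = M := by
        ext i j
        exact hN i j
      obtain ⟨g, hg⟩ := hsurj (Matrix.of N)
        (star_mul_self_iff.2 (Matrix.map_injective ι.injective (by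
          exact (hmap (Matrix.of N)).symm.trans (hM2.trans (map_one ι.mapMatrix).symm))))
        (ι.injective (by rw [map_one, RingHom.map_det]; exact hM3))
      exact ⟨g, by rw [← hg]; rfl⟩)
    hζ (fun x hx => root_norm h3 hφ (hr x hx)) (fun x hx => root_fixed h3 hφ (hr x hx))
    (fun x hx => root_cube hφ (hr x hx)) (fun x hx => root_trace hφ (hr x hx))
  refine ⟨?_, h2⟩
  rw [← h1, ← card_curve_two (by omega) (φ := starRingEnd (Fq2 n)) (fun x => rfl) (card_Fq2 n)
    (fun x => star_star x), ← card_cubicPoints hι hfix, card_curve_six (by omega) hφ hK]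

theorem split_arith {q N : ℕ} (h : (q ^ 3 + 1) * q ^ 3 = N * 2) :
    ((q : ℤ) ^ 6 + (q : ℤ) ^ 3) / 2 = N := by
  have h3 : (q : ℤ) ^ 6 + (q : ℤ) ^ 3 = N * 2 := by
    zify at h
    linear_combination h
  rw [h3, Int.mul_ediv_cancel _ two_ne_zero]

theorem cubic_arith {q N : ℕ} (hq : 0 < q) (h : q ^ 6 + q ^ 5 - q ^ 4 = q ^ 3 + N * 3) :
    ((q : ℤ) ^ 6 + (q : ℤ) ^ 5 - (q : ℤ) ^ 4 - (q : ℤ) ^ 3) / 3 = N := by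
  have h3 : (q : ℤ) ^ 6 + (q : ℤ) ^ 5 - (q : ℤ) ^ 4 - (q : ℤ) ^ 3 = N * 3 := by
    have hle : q ^ 4 ≤ q ^ 6 + q ^ 5 :=
      (Nat.pow_le_pow_right hq (by norm_num)).trans (Nat.le_add_left _ _)
    zify [hle] at h
    linear_combination h
  rw [h3, Int.mul_ediv_cancel _ three_ne_zero]

-- STATEMENT 19
theorem stmt19 (n : ℕ) (hn : 1 ≤ n) (p : ℕ) (hp : p.Prime)
    (m : Subgroup (PSU3 n) → ℤ) (hm : IsPMobiusBot p m) :
    (p ∣ qval n - 1 →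
      (∑ᶠ H ∈ {H : Subgroup (PSU3 n) | IsPGroup p H ∧ H ≠ ⊥}, m H) =
        -(((qval n : ℤ) ^ 6 + (qval n : ℤ) ^ 3) / 2)) ∧
    (p ∣ qval n ^ 2 - qval n + 1 →
      (∑ᶠ H ∈ {H : Subgroup (PSU3 n) | IsPGroup p H ∧ H ≠ ⊥}, m H) =
        -(((qval n : ℤ) ^ 6 + (qval n : ℤ) ^ 5 - (qval n : ℤ) ^ 4 - (qval n : ℤ) ^ 3) / 3)) := by
  have hpf : Fact p.Prime := ⟨hp⟩
  refine ⟨fun h => ?_, fun h => ?_⟩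
  · obtain ⟨h1, h2⟩ := card_sub_PSU3_split n hn h
    rw [mobius_sum hp m hm h2, split_arith h1]
  · obtain ⟨h1, h2⟩ := card_sub_PSU3_cubic n hn h
    rw [mobius_sum hp m hm h2, cubic_arith (by positivity) h1]

end PSUPaper
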